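/- arXiv:2009.14077 — 3 statements merged into one kernel-verified Lean document; each statement's English description precedes it below -/
import Mathlib

section
/- For each integer k ≥ 1 the following holds as a polynomial identity in w₁,…,w_{2k}, x, y, u, v and ζ: (x−u)(y−v)·H_{2(k+2)}(w₁,…,w_{2k},x,y,u,v)·H_{2k}(w₁,…,w_{2k}) = h(x,v)h(y,u)·H_{2(k+1)}(w₁,…,w_{2k},u,v)·H_{2(k+1)}(w₁,…,w_{2k},x,y) − h(x,y)h(u,v)·H_{2(k+1)}(w₁,…,w_{2k},y,u)·H_{2(k+1)}(w₁,…,w_{2k},x,v). -/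
noncomputable section

open Complex
open scoped BigOperators

/-- Jacobi theta function `ϑ₁(z|τ)` with nome `p = e^{iπτ}` (Whittaker–Watson convention). -/
def th1 (z τ : ℂ) : ℂ :=
  -Complex.I * ∑' n : ℤ, (-1 : ℂ) ^ n *
    Complex.exp ((Real.pi : ℂ) * Complex.I * τ * ((n : ℂ) + 1/2) ^ 2 + (2 * (n : ℂ) + 1) * Complex.I * z)

/-- Jacobi theta function `ϑ₂(z|τ)`. -/
def th2 (z τ : ℂ) : ℂ :=
  ∑' n : ℤ,
    Complex.exp ((Real.pi : ℂ) * Complex.I * τ * ((n : ℂ) + 1/2) ^ 2 + (2 * (n : ℂ) + 1) * Complex.I * z)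

/-- Jacobi theta function `ϑ₃(z|τ)`. -/
def th3 (z τ : ℂ) : ℂ :=
  ∑' n : ℤ, Complex.exp ((Real.pi : ℂ) * Complex.I * τ * (n : ℂ) ^ 2 + 2 * (n : ℂ) * Complex.I * z)

/-- Jacobi theta function `ϑ₄(z|τ)`. -/
def th4 (z τ : ℂ) : ℂ :=
  ∑' n : ℤ, (-1 : ℂ) ^ n *
    Complex.exp ((Real.pi : ℂ) * Complex.I * τ * (n : ℂ) ^ 2 + 2 * (n : ℂ) * Complex.I * z)

/-- The crossing parameter `η = π/3`. -/
def ηc : ℂ := (Real.pi : ℂ) / 3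

/-- The elliptic nome `p = e^{iπτ}`. -/
def pnome (τ : ℂ) : ℂ := Complex.exp ((Real.pi : ℂ) * Complex.I * τ)

/-- `ζ = (ϑ₁(η,p²)/ϑ₄(η,p²))²`. -/
def zet (τ : ℂ) : ℂ := (th1 ηc (2 * τ) / th4 ηc (2 * τ)) ^ 2

/-- The nome `p` is real with `0 < p < 1`. -/
def preal (τ : ℂ) : Prop := (pnome τ).im = 0 ∧ 0 < (pnome τ).re ∧ (pnome τ).re < 1

/-- A tuple given by a list of prescribed entries, padded by zeros. -/
def padded {n : ℕ} (l : List ℂ) : Fin n → ℂ := fun j => l.getD (j : ℕ) 0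

/-- Extension of a tuple by a list of prescribed further entries (padded by zeros). -/
def extL {m n : ℕ} (w : Fin m → ℂ) (l : List ℂ) : Fin n → ℂ :=
  fun j => if h : (j : ℕ) < m then w ⟨j, h⟩ else l.getD ((j : ℕ) - m) 0

/-- First `k` entries of a `2k`-tuple. -/
def firstHalf {k : ℕ} (x : Fin (2 * k) → ℂ) : Fin k → ℂ :=
  fun i => x ⟨(i : ℕ), by have := i.2; omega⟩

/-- Last `k` entries of a `2k`-tuple. -/
def secondHalf {k : ℕ} (x : Fin (2 * k) → ℂ) : Fin k → ℂ :=
  fun i => x ⟨k + (i : ℕ), by have := i.2; omega⟩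

/-- `𝕙(x,y) = ϑ₁(x−y+η)ϑ₁(x−y−η)ϑ₁(x+y+η)ϑ₁(x+y−η)`. -/
def hh (τ x y : ℂ) : ℂ :=
  th1 (x - y + ηc) τ * th1 (x - y - ηc) τ * th1 (x + y + ηc) τ * th1 (x + y - ηc) τ

/-- `𝔻(x₁,…,x_k) = ∏_{i<j} ϑ₁(x_j−x_i)ϑ₁(x_j+x_i)`. -/
def vdTheta (τ : ℂ) {k : ℕ} (y : Fin k → ℂ) : ℂ :=
  ∏ i : Fin k, ∏ j : Fin k, if i < j then th1 (y j - y i) τ * th1 (y j + y i) τ else 1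

/-- The elliptic Tsuchiya determinant `ℍ_{2k}(x₁,…,x_k; x_{k+1},…,x_{2k})`. -/
def tsuchiya (τ : ℂ) (k : ℕ) (x : Fin (2 * k) → ℂ) : ℂ :=
  (∏ i : Fin k, ∏ j : Fin k, hh τ (firstHalf x i) (secondHalf x j))
    / (vdTheta τ (firstHalf x) * vdTheta τ (secondHalf x))
    * Matrix.det (Matrix.of fun i j : Fin k => (hh τ (firstHalf x i) (secondHalf x j))⁻¹)

/-- The expression defining the elliptic Tsuchiya determinant is well defined:
the Vandermonde-type denominators and the entries `𝕙(x_i,x_{j+k})` are nonzero. -/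
def tsuDefined (τ : ℂ) (k : ℕ) (x : Fin (2 * k) → ℂ) : Prop :=
  (∀ i j : Fin k, i ≠ j →
    th1 (firstHalf x j - firstHalf x i) τ ≠ 0 ∧ th1 (firstHalf x j + firstHalf x i) τ ≠ 0) ∧
  (∀ i j : Fin k, i ≠ j →
    th1 (secondHalf x j - secondHalf x i) τ ≠ 0 ∧ th1 (secondHalf x j + secondHalf x i) τ ≠ 0) ∧
  (∀ i j : Fin k, hh τ (firstHalf x i) (secondHalf x j) ≠ 0)

/-- `h(w,w') = 1 − (3+ζ²)ww' + (1−ζ²)ww'(w+w')`. -/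
def hpol (ζ w w' : ℂ) : ℂ := 1 - (3 + ζ ^ 2) * w * w' + (1 - ζ ^ 2) * w * w' * (w + w')

/-- Vandermonde product `Δ(w₁,…,w_k) = ∏_{i<j}(w_j − w_i)`. -/
def vdm {k : ℕ} (y : Fin k → ℂ) : ℂ :=
  ∏ i : Fin k, ∏ j : Fin k, if i < j then y j - y i else 1

/-- The determinant-ratio expression defining the polynomial `H_{2k}`. -/
def Hratio (ζ : ℂ) (k : ℕ) (w : Fin (2 * k) → ℂ) : ℂ :=
  (∏ i : Fin k, ∏ j : Fin k, hpol ζ (firstHalf w i) (secondHalf w j))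
    / (vdm (firstHalf w) * vdm (secondHalf w))
    * Matrix.det (Matrix.of fun i j : Fin k => (hpol ζ (firstHalf w i) (secondHalf w j))⁻¹)

/-- The expression `Hratio` is well defined at `w`. -/
def HratioDefined (ζ : ℂ) (k : ℕ) (w : Fin (2 * k) → ℂ) : Prop :=
  (∀ i j : Fin k, i ≠ j → firstHalf w i ≠ firstHalf w j) ∧
  (∀ i j : Fin k, i ≠ j → secondHalf w i ≠ secondHalf w j) ∧
  (∀ i j : Fin k, hpol ζ (firstHalf w i) (secondHalf w j) ≠ 0)

/-- `H` is the family of Rosengren–Zinn-Justin polynomials `H_{2k}` for parameter `ζ`: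
for each `k`, `H k` is a polynomial function of the `2k` variables agreeing with the
determinant-ratio formula wherever the latter is defined, and `H 0 = 1`. -/
def IsHFamily (ζ : ℂ) (H : (k : ℕ) → (Fin (2 * k) → ℂ) → ℂ) : Prop :=
  (∀ w, H 0 w = 1) ∧
  (∀ k : ℕ, ∃ P : MvPolynomial (Fin (2 * k)) ℂ, ∀ w, H k w = MvPolynomial.eval w P) ∧
  (∀ (k : ℕ) (w : Fin (2 * k) → ℂ), HratioDefined ζ k w → H k w = Hratio ζ k w)

/-- Vertex weight `a(u)`. -/
def av (τ u : ℂ) : ℂ := th4 (2*ηc) (2*τ) * th1 (u + 2*ηc) (2*τ) * th4 u (2*τ)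
/-- Vertex weight `b(u)`. -/
def bv (τ u : ℂ) : ℂ := th4 (2*ηc) (2*τ) * th4 (u + 2*ηc) (2*τ) * th1 u (2*τ)
/-- Vertex weight `c(u)`. -/
def cv (τ u : ℂ) : ℂ := th1 (2*ηc) (2*τ) * th4 (u + 2*ηc) (2*τ) * th4 u (2*τ)
/-- Vertex weight `d(u)`. -/
def dv (τ u : ℂ) : ℂ := th1 (2*ηc) (2*τ) * th1 (u + 2*ηc) (2*τ) * th1 u (2*τ)
/-- `r(u) = a(u) + b(u)`. -/
def rv (τ u : ℂ) : ℂ := av τ u + bv τ u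

/-- Entries of the `R`-matrix of the eight-vertex model, in the basis `{↑↑,↑↓,↓↑,↓↓}`
identified with `Fin 2 × Fin 2` (`↑ = 0`, `↓ = 1`). -/
def Rent (τ u : ℂ) (p q : Fin 2 × Fin 2) : ℂ :=
  if p = q then (if p.1 = p.2 then av τ u else bv τ u)
  else if q = (p.2, p.1) then cv τ u
  else if p.1 = p.2 ∧ q.1 = q.2 then dv τ u
  else 0

/-- Entries of `Ř(u) = 𝒫 R(u)`. -/
def Rcheckent (τ u : ℂ) (p q : Fin 2 × Fin 2) : ℂ := Rent τ u (p.2, p.1) q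

/-- The boundary vector `χ(x) ∈ ℂ²⊗ℂ²`. -/
def chiV (τ lam x : ℂ) : Fin 2 × Fin 2 → ℂ := fun p =>
  if p = ((0 : Fin 2), (1 : Fin 2)) then th1 (x + lam) (2*τ) * th4 (x - lam - 2*ηc) (2*τ)
  else if p = ((1 : Fin 2), (0 : Fin 2)) then th1 (x - lam - 2*ηc) (2*τ) * th4 (x + lam) (2*τ)
  else 0

/-- The boundary vector `χ̄(x) ∈ ℂ²⊗ℂ²`. -/
def chibarV (τ lam x : ℂ) : Fin 2 × Fin 2 → ℂ := fun p =>
  if p = ((0 : Fin 2), (0 : Fin 2)) then th1 (x + lam) (2*τ) * th1 (x - lam - 2*ηc) (2*τ)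
  else if p = ((1 : Fin 2), (1 : Fin 2)) then th4 (x - lam - 2*ηc) (2*τ) * th4 (x + lam) (2*τ)
  else 0

/-- A family `Ψ_n(u₁,…,u_{2n+1}) ∈ (ℂ²)^{⊗(2n+1)}`, represented by its components
with respect to spin configurations `α : Fin (2n+1) → Fin 2` (`↑ = 0`, `↓ = 1`). -/
abbrev PsiFam := (n : ℕ) → (Fin (2 * n + 1) → ℂ) → (Fin (2 * n + 1) → Fin 2) → ℂ

/-- The action of `Ř(u)` on tensor factors `i`, `j` of `(ℂ²)^{⊗L}`. -/
def applyRc (τ u : ℂ) {L : ℕ} (i j : Fin L) (ψ : (Fin L → Fin 2) → ℂ) :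
    (Fin L → Fin 2) → ℂ := fun α =>
  ∑ s : Fin 2, ∑ t : Fin 2,
    Rcheckent τ u (α i, α j) (s, t) * ψ (Function.update (Function.update α i s) j t)

/-- Spin flip. -/
def flipS : Fin 2 → Fin 2 := fun s => if s = 0 then 1 else 0

/-- Components of the singlet `s = ↑↓ − ↓↑`. -/
def singletC : Fin 2 → Fin 2 → ℂ := fun s t =>
  if s = 0 ∧ t = 1 then 1 else if s = 1 ∧ t = 0 then -1 else 0

/-- Delete the entries at positions `i`, `i+1` from a tuple. -/
def delTwo {α : Type*} {n : ℕ} (i : ℕ) (u : Fin (2 * (n + 1) + 1) → α) : Fin (2 * n + 1) → α :=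
  fun j => if _h : (j : ℕ) < i then u ⟨j, by have := j.2; omega⟩
           else u ⟨(j : ℕ) + 2, by have := j.2; omega⟩

/-- The components of `Ψ_n` are entire functions of each `u_i`. -/
def PsiEntire (Ψ : PsiFam) : Prop :=
  ∀ (n : ℕ) (u : Fin (2*n+1) → ℂ) (i : Fin (2*n+1)) (α : Fin (2*n+1) → Fin 2),
    Differentiable ℂ fun z => Ψ n (Function.update u i z) α

/-- (P1): the exchange relations. -/
def PsiP1 (τ : ℂ) (Ψ : PsiFam) : Prop :=
  ∀ (n : ℕ) (u : Fin (2*n+1) → ℂ) (i j : Fin (2*n+1)), (j : ℕ) = (i : ℕ) + 1 →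
    applyRc τ (u j - u i) i j (Ψ n u)
      = fun α => rv τ (u j - u i) * Ψ n (fun l => u (Equiv.swap i j l)) α

/-- (P2): local spin flips. -/
def PsiP2 (τ : ℂ) (Ψ : PsiFam) : Prop :=
  ∀ (n : ℕ) (u : Fin (2*n+1) → ℂ) (i : Fin (2*n+1)) (α : Fin (2*n+1) → Fin 2),
    Ψ n u (Function.update α i (flipS (α i)))
      = (-(pnome τ)) ^ n * Complex.exp (-Complex.I * ∑ j, (u j - u i))
        * Ψ n (Function.update u i (u i + Real.pi * τ)) α

/-- (P3): quasi-periodicity of `Ψ_n` in each `u_i`. -/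
def PsiP3 (τ : ℂ) (Ψ : PsiFam) : Prop :=
  ∀ (n : ℕ) (u : Fin (2*n+1) → ℂ) (i : Fin (2*n+1)),
    (Ψ n (Function.update u i (u i + Real.pi))
      = fun α => (∏ j ∈ Finset.univ.erase i, (if α j = 0 then (1:ℂ) else -1)) * Ψ n u α) ∧
    (Ψ n (Function.update u i (u i + 2 * Real.pi * τ))
      = fun α => (pnome τ ^ (4*n))⁻¹ *
          Complex.exp (-2 * Complex.I * ∑ j, (u i - u j)) * Ψ n u α)

/-- (P4): the wheel condition. -/
def PsiP4 (Ψ : PsiFam) : Prop :=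
  ∀ (n : ℕ) (u : Fin (2*n+1) → ℂ),
    (∃ i j k : Fin (2*n+1), i < j ∧ j < k ∧ u j = u i + 2*ηc ∧ u k = u i + 4*ηc) →
    Ψ n u = 0

/-- (P5): the reduction relations. -/
def PsiP5 (τ : ℂ) (Ψ : PsiFam) : Prop :=
  ∀ (n : ℕ) (u : Fin (2*(n+1)+1) → ℂ) (i : ℕ) (hi : i + 1 < 2*(n+1)+1),
    u ⟨i+1, hi⟩ = u ⟨i, by omega⟩ + 2*ηc →
    Ψ (n+1) u = fun α =>
      (∏ j ∈ (Finset.univ.erase (⟨i, by omega⟩ : Fin (2*(n+1)+1))).erase ⟨i+1, hi⟩,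
          th1 (u ⟨i, by omega⟩ - u j - 2*ηc) τ)
        * singletC (α ⟨i, by omega⟩) (α ⟨i+1, hi⟩)
        * Ψ n (delTwo i u) (delTwo i α)

/-- (P6): `Ψ₀ = ↑ + ↓`. -/
def PsiP6 (Ψ : PsiFam) : Prop := ∀ u α, Ψ 0 u α = 1

/-- The inhomogeneity parameters `(x₁,−x₁,…,x_n,−x_n,0)`. -/
def interleave {n : ℕ} (x : Fin n → ℂ) : Fin (2*n+1) → ℂ := fun j =>
  if h : (j : ℕ) < 2*n then
    (if (j : ℕ) % 2 = 0 then x ⟨(j:ℕ)/2, by omega⟩ else -x ⟨(j:ℕ)/2, by omega⟩)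
  else 0

/-- Components of `χ(x)`. -/
def chiC (τ lam x : ℂ) (s t : Fin 2) : ℂ :=
  if s = 0 ∧ t = 1 then th1 (x + lam) (2*τ) * th4 (x - lam - 2*ηc) (2*τ)
  else if s = 1 ∧ t = 0 then th1 (x - lam - 2*ηc) (2*τ) * th4 (x + lam) (2*τ)
  else 0

/-- Components of `χ̄(x)`. -/
def chibarC (τ lam x : ℂ) (s t : Fin 2) : ℂ :=
  if s = 0 ∧ t = 0 then th1 (x + lam) (2*τ) * th1 (x - lam - 2*ηc) (2*τ)
  else if s = 1 ∧ t = 1 then th4 (x - lam - 2*ηc) (2*τ) * th4 (x + lam) (2*τ)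
  else 0

/-- The scalar product `Z_n(x₁,…,x_n) = ⟨ξ_n(x₁,…,x_n), Ψ_n(x₁,−x₁,…,x_n,−x_n,0)⟩`. -/
def Zfun (τ lam : ℂ) (Ψ : PsiFam) (n : ℕ) (x : Fin n → ℂ) : ℂ :=
  ∑ α : Fin (2*n+1) → Fin 2,
    (∏ m : Fin n, chiC τ lam (x m)
        (α ⟨2*(m:ℕ), by have := m.2; omega⟩) (α ⟨2*(m:ℕ)+1, by have := m.2; omega⟩))
      * (if α ⟨2*n, by omega⟩ = 0 then (1:ℂ) else 0)
      * Ψ n (interleave x) α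

/-- The scalar product `Z̄_n^±(x₁,…,x_n)`, with `ε = ±1`. -/
def Zbarfun (τ lam ε : ℂ) (Ψ : PsiFam) (n : ℕ) (x : Fin n → ℂ) : ℂ :=
  ∑ α : Fin (2*n+1) → Fin 2,
    (∏ m : Fin n, chibarC τ lam (x m)
        (α ⟨2*(m:ℕ), by have := m.2; omega⟩) (α ⟨2*(m:ℕ)+1, by have := m.2; omega⟩))
      * (if α ⟨2*n, by omega⟩ = 0 then (1:ℂ) else ε)
      * Ψ n (interleave x) α

/-- The normalisation constant `𝒩_n`. -/
def Ncoef (τ : ℂ) (n : ℕ) : ℂ :=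
  (-1 : ℂ) ^ ((n+1)/2) * (th1 ηc τ ^ (n^2))⁻¹ * (th4 0 (2*τ) / th4 ηc (2*τ)) ^ (n*(n+1)/2)

/-- The vector `ψ_n = 𝒩_n Ψ_n(0,…,0)`. -/
def psiH (τ : ℂ) (Ψ : PsiFam) (n : ℕ) (α : Fin (2*n+1) → Fin 2) : ℂ :=
  Ncoef τ n * Ψ n (fun _ => 0) α

/-- The scalar product `S_n(μ) = ((⟨↑↓| + μ⟨↓↑|)^{⊗n} ⊗ ⟨↑|) ψ_n`. -/
def Sfun (τ : ℂ) (Ψ : PsiFam) (n : ℕ) (μ : ℂ) : ℂ :=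
  ∑ α : Fin (2*n+1) → Fin 2,
    (∏ m : Fin n,
      (if α ⟨2*(m:ℕ), by have := m.2; omega⟩ = 0 ∧ α ⟨2*(m:ℕ)+1, by have := m.2; omega⟩ = 1
        then (1:ℂ)
       else if α ⟨2*(m:ℕ), by have := m.2; omega⟩ = 1 ∧ α ⟨2*(m:ℕ)+1, by have := m.2; omega⟩ = 0
        then μ
       else 0))
      * (if α ⟨2*n, by omega⟩ = 0 then (1:ℂ) else 0) * psiH τ Ψ n α

/-- The scalar product `S̄_n^±(ν) = ((⟨↑↑| + ν⟨↓↓|)^{⊗n} ⊗ (⟨↑| ± ⟨↓|)) ψ_n`, with `ε = ±1`. -/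
def Sbarfun (τ ε : ℂ) (Ψ : PsiFam) (n : ℕ) (ν : ℂ) : ℂ :=
  ∑ α : Fin (2*n+1) → Fin 2,
    (∏ m : Fin n,
      (if α ⟨2*(m:ℕ), by have := m.2; omega⟩ = 0 ∧ α ⟨2*(m:ℕ)+1, by have := m.2; omega⟩ = 0
        then (1:ℂ)
       else if α ⟨2*(m:ℕ), by have := m.2; omega⟩ = 1 ∧ α ⟨2*(m:ℕ)+1, by have := m.2; omega⟩ = 1
        then ν
       else 0))
      * (if α ⟨2*n, by omega⟩ = 0 then (1:ℂ) else ε) * psiH τ Ψ n α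

/-- The alternating spin configuration `↑↓↑↓⋯↑`. -/
def altConf {L : ℕ} : Fin L → Fin 2 := fun j => if (j : ℕ) % 2 = 0 then 0 else 1

/-- The fully polarised spin configuration `↓⋯↓`. -/
def downConf {L : ℕ} : Fin L → Fin 2 := fun _ => 1

/-- The spin configuration `↑⋯↑↓` with a single `↓` at the last site. -/
def lastDownConf {n : ℕ} : Fin (2*n+1) → Fin 2 := fun j => if (j : ℕ) = 2*n then 1 else 0

/-- `J₂ = −1/2`. -/
def J2c : ℂ := -(1/2)
/-- `J₃ = 1/(1+ζ)`. -/
def J3c (ζ : ℂ) : ℂ := 1/(1+ζ)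
/-- `J₄ = 1/(1−ζ)`. -/
def J4c (ζ : ℂ) : ℂ := 1/(1-ζ)
/-- `μ̄ = (μ−1)²/((ζ²−1)μ)`. -/
def mubar (ζ μ : ℂ) : ℂ := (μ - 1)^2 / ((ζ^2 - 1)*μ)
/-- `ν̄ = (ν−ζ)(νζ−1)/((ζ²−1)ν)`. -/
def nubar (ζ ν : ℂ) : ℂ := (ν - ζ)*(ν*ζ - 1) / ((ζ^2 - 1)*ν)

/-- The elliptic function `w(x)`. -/
def wfun (τ x : ℂ) : ℂ :=
  th4 ηc (2*τ) / th4 0 (2*τ) * th1 x τ ^ 2 / (th1 (x - ηc) τ * th1 (x + ηc) τ)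

/-- `β₂ = η + π/2`. -/
def β2c : ℂ := ηc + (Real.pi : ℂ)/2
/-- `β₃ = η + π/2 + πτ/2`. -/
def β3c (τ : ℂ) : ℂ := ηc + (Real.pi : ℂ)/2 + (Real.pi : ℂ)*τ/2
/-- `β₄ = η + πτ/2`. -/
def β4c (τ : ℂ) : ℂ := ηc + (Real.pi : ℂ)*τ/2

/-- `f` is an (even) theta function of degree `m`, nome `p = e^{iπτ}` and norm `0`
with respect to each of its variables. -/
def ThetaLike (τ : ℂ) (m : ℕ) {n : ℕ} (X : (Fin n → ℂ) → ℂ) : Prop :=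
  ∀ (x : Fin n → ℂ) (i : Fin n),
    Differentiable ℂ (fun z => X (Function.update x i z)) ∧
    (∀ z, X (Function.update x i (z + Real.pi)) = X (Function.update x i z)) ∧
    (∀ z, X (Function.update x i (z + Real.pi * τ))
        = ((-(pnome τ)) ^ m)⁻¹ * Complex.exp (-2 * Complex.I * ((m : ℂ) * z))
            * X (Function.update x i z)) ∧
    (∀ z, X (Function.update x i (-z)) = X (Function.update x i z))



/-! ### Determinant identities -/

/-- The determinant of the matrix `A` bordered by the `i`-th row of `C` and `D` and the `j`-th
column of `B` and `D`. -/
def borderedDet {k : ℕ} (A : Matrix (Fin k) (Fin k) ℂ) (B : Matrix (Fin k) (Fin 2) ℂ)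
    (C : Matrix (Fin 2) (Fin k) ℂ) (D : Matrix (Fin 2) (Fin 2) ℂ) (i j : Fin 2) : ℂ :=
  (Matrix.fromBlocks A (B.submatrix id fun _ : Fin 1 => j) (C.submatrix (fun _ : Fin 1 => i) id)
    (D.submatrix (fun _ : Fin 1 => i) fun _ : Fin 1 => j)).det

theorem desnanot_jacobi_of_isUnit {k : ℕ} (A : Matrix (Fin k) (Fin k) ℂ)
    (B : Matrix (Fin k) (Fin 2) ℂ) (C : Matrix (Fin 2) (Fin k) ℂ) (D : Matrix (Fin 2) (Fin 2) ℂ)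
    (hA : A.det ≠ 0) :
    (Matrix.fromBlocks A B C D).det * A.det
      = borderedDet A B C D 0 0 * borderedDet A B C D 1 1
        - borderedDet A B C D 0 1 * borderedDet A B C D 1 0 := by
  let _ : Invertible A := A.invertibleOfIsUnitDet (isUnit_iff_ne_zero.2 hA)
  have hb : ∀ i j, borderedDet A B C D i j = A.det * (D - C * ⅟A * B) i j := by
    intro i j
    rw [borderedDet, Matrix.det_fromBlocks₁₁, Matrix.det_fin_one]
    rfl
  rw [Matrix.det_fromBlocks₁₁, Matrix.det_fin_two, hb, hb, hb, hb]
  ring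

/-- The Desnanot–Jacobi identity. -/
theorem desnanot_jacobi {k : ℕ} (A : Matrix (Fin k) (Fin k) ℂ)
    (B : Matrix (Fin k) (Fin 2) ℂ) (C : Matrix (Fin 2) (Fin k) ℂ) (D : Matrix (Fin 2) (Fin 2) ℂ) :
    (Matrix.fromBlocks A B C D).det * A.det
      = borderedDet A B C D 0 0 * borderedDet A B C D 1 1
        - borderedDet A B C D 0 1 * borderedDet A B C D 1 0 := by
  have hdense : Dense {t : ℂ | (A + Matrix.scalar (Fin k) t).det ≠ 0} := by
    have hfin : {t : ℂ | (A + Matrix.scalar (Fin k) t).det = 0}.Finite := by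
      refine ((-A).charpoly.roots.toFinset.finite_toSet).subset fun t ht => ?_
      have h0 : (-A).charpoly ≠ 0 := (Matrix.charpoly_monic _).ne_zero
      simp only [Finset.mem_coe, Multiset.mem_toFinset, Polynomial.mem_roots h0,
        Polynomial.IsRoot.def, Matrix.eval_charpoly]
      rw [sub_neg_eq_add, add_comm]
      exact ht
    exact hfin.countable.dense_compl ℝ
  have hA : Continuous fun t : ℂ => A + Matrix.scalar (Fin k) t := by
    refine continuous_const.add ?_
    exact Continuous.matrix_diagonal (continuous_pi fun _ => continuous_id)
  have hcont : ∀ i j, Continuous fun t : ℂ =>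
      borderedDet (A + Matrix.scalar (Fin k) t) B C D i j := fun i j =>
    (hA.matrix_fromBlocks continuous_const continuous_const continuous_const).matrix_det
  have key := Continuous.ext_on hdense
    (f := fun t : ℂ => (Matrix.fromBlocks (A + Matrix.scalar (Fin k) t) B C D).det
      * (A + Matrix.scalar (Fin k) t).det)
    (((hA.matrix_fromBlocks continuous_const continuous_const continuous_const).matrix_det).mul
      hA.matrix_det)
    (((hcont 0 0).mul (hcont 1 1)).sub ((hcont 0 1).mul (hcont 1 0)))
    fun t ht => desnanot_jacobi_of_isUnit _ B C D ht
  simpa using congrFun key 0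

theorem vdm_eq_det {k : ℕ} (y : Fin k → ℂ) : vdm y = (Matrix.vandermonde y).det := by
  rw [Matrix.det_vandermonde, vdm]
  refine Finset.prod_congr rfl fun i _ => ?_
  rw [← Finset.prod_filter]
  exact Finset.prod_congr (by ext; simp) fun _ _ => rfl

theorem vdm_comp_perm {k : ℕ} (y : Fin k → ℂ) (σ : Equiv.Perm (Fin k)) :
    vdm (y ∘ σ) = (Equiv.Perm.sign σ : ℂ) * vdm y := by
  rw [vdm_eq_det, vdm_eq_det, ← Matrix.det_permute]
  rfl

theorem vdm_append {k l : ℕ} (a : Fin k → ℂ) (c : Fin l → ℂ) :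
    vdm (Fin.append a c) = vdm a * vdm c * ∏ i, ∏ j, (c j - a i) := by
  have h1 : ∀ (i : Fin l) (j : Fin k), ¬ Fin.natAdd k i < Fin.castAdd l j := by
    intro i j h
    have := Fin.lt_def.1 h
    simp only [Fin.val_natAdd, Fin.val_castAdd] at this
    omega
  have h2 : ∀ (i : Fin k) (j : Fin l), Fin.castAdd l i < Fin.natAdd k j := by
    intro i j
    rw [Fin.lt_def]
    simp only [Fin.val_natAdd, Fin.val_castAdd]
    omega
  have h3 : ∀ i j : Fin k, Fin.castAdd l i < Fin.castAdd l j ↔ i < j := fun i j => Iff.rfl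
  simp only [vdm, Fin.prod_univ_add, Fin.append_left, Fin.append_right, h1, h2, h3, if_true, if_false,
    Finset.prod_mul_distrib, Finset.prod_const_one, Fin.natAdd_lt_natAdd_iff]
  ring

theorem sq_vdm {k : ℕ} (y : Fin k → ℂ) :
    ∏ i, ∏ j ∈ Finset.univ.erase i, (y i - y j)
      = (∏ i : Fin k, ∏ _j ∈ Finset.Ioi i, (-1 : ℂ)) * vdm y ^ 2 := by
  have h := Finset.prod_prod_Ioi_mul_eq_prod_prod_off_diag fun i j : Fin k => y j - y i
  have h' : ∀ i : Fin k, Finset.univ.erase i = ({i}ᶜ : Finset (Fin k)) := fun i => by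
    ext; simp
  simp only [h']
  rw [← h, vdm_eq_det, Matrix.det_vandermonde, ← Finset.prod_pow, ← Finset.prod_mul_distrib]
  refine Finset.prod_congr rfl fun i _ => ?_
  rw [← Finset.prod_pow, ← Finset.prod_mul_distrib]
  exact Finset.prod_congr rfl fun j _ => by ring

/-- A double Vandermonde determinant as a Cauchy-type determinant. -/
theorem det_double_vandermonde {m : ℕ} (x y a b : Fin m → ℂ) (hx : Function.Injective x)
    (hxy : ∀ i j, y j ≠ x i) :
    (Matrix.fromBlocks (Matrix.vandermonde x) (Matrix.diagonal a * Matrix.vandermonde x)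
      (Matrix.vandermonde y) (Matrix.diagonal b * Matrix.vandermonde y)).det
    = (∏ i : Fin m, ∏ _j ∈ Finset.Ioi i, (-1 : ℂ)) * (∏ j, ∏ i, (y j - x i))
      * (Matrix.of fun j i : Fin m => (b j - a i) / (y j - x i)).det := by
  set V := Matrix.vandermonde x with hV
  set W := Matrix.vandermonde y with hW
  set L : Matrix (Fin m) (Fin m) ℂ :=
    Matrix.of fun j i => (Lagrange.basis Finset.univ x i).eval (y j) with hL
  have hVdet : V.det ≠ 0 := Matrix.det_vandermonde_ne_zero_iff.2 hx
  let _ : Invertible V := V.invertibleOfIsUnitDet (isUnit_iff_ne_zero.2 hVdet)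
  have hLV : L * V = W := by
    ext j n
    have hinterp := Lagrange.eq_interpolate (s := Finset.univ) (v := x)
      (f := (Polynomial.X ^ (n : ℕ) : Polynomial ℂ)) hx.injOn (by simp)
    have := congrArg (Polynomial.eval (y j)) hinterp
    simp only [Lagrange.interpolate_apply, Polynomial.eval_finsetSum, Polynomial.eval_mul,
      Polynomial.eval_C, Polynomial.eval_pow, Polynomial.eval_X] at this
    simp only [Matrix.mul_apply, hL, hV, hW, Matrix.of_apply, Matrix.vandermonde_apply]
    rw [this]
    exact Finset.sum_congr rfl fun i _ => mul_comm _ _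
  have hWV : W * ⅟V = L := by rw [← hLV, Matrix.mul_assoc, mul_invOf_self, Matrix.mul_one]
  have hfac : Matrix.diagonal b * W - W * ⅟V * (Matrix.diagonal a * V)
      = (Matrix.diagonal b * L - L * Matrix.diagonal a) * V := by
    rw [hWV, Matrix.sub_mul, Matrix.mul_assoc, hLV, Matrix.mul_assoc]
  have hentry : Matrix.diagonal b * L - L * Matrix.diagonal a
      = Matrix.of fun j i => (∏ l, (y j - x l)) *
          (Matrix.of fun j i : Fin m => (∏ l ∈ Finset.univ.erase i, (x i - x l)⁻¹) *
            (Matrix.of fun j i : Fin m => (b j - a i) / (y j - x i)) j i) j i := by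
    ext j i
    simp only [Matrix.sub_apply, Matrix.diagonal_mul, Matrix.mul_diagonal, Matrix.of_apply, hL]
    rw [Lagrange.eval_basis_not_at_node (Finset.mem_univ i) (hxy i j), Lagrange.eval_nodal,
      Lagrange.nodalWeight]
    ring
  have hprod : ∏ i, ∏ l ∈ Finset.univ.erase i, (x i - x l)⁻¹
      = ((∏ i : Fin m, ∏ _j ∈ Finset.Ioi i, (-1 : ℂ)) * V.det ^ 2)⁻¹ := by
    rw [hV, ← vdm_eq_det, ← sq_vdm]
    simp only [Finset.prod_inv_distrib]
  have hsign : (∏ i : Fin m, ∏ _j ∈ Finset.Ioi i, (-1 : ℂ)) ^ 2 = 1 := by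
    rw [← Finset.prod_pow]
    refine Finset.prod_eq_one fun i _ => ?_
    rw [← Finset.prod_pow]
    exact Finset.prod_eq_one fun j _ => by norm_num
  rw [Matrix.det_fromBlocks₁₁, hfac, Matrix.det_mul, hentry, Matrix.det_mul_column,
    Matrix.det_mul_row, hprod]
  generalize (∏ i : Fin m, ∏ _j ∈ Finset.Ioi i, (-1 : ℂ)) = s at hsign
  have hs : s ≠ 0 := by rintro rfl; norm_num at hsign
  field_simp
  rw [hsign, mul_one]

/-! ### Symmetry of the determinant ratio -/

/-- The `2m`-tuple with prescribed first and second halves. -/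
def joinHalves {m : ℕ} (a b : Fin m → ℂ) : Fin (2 * m) → ℂ :=
  Fin.append a b ∘ Fin.cast (two_mul m)

theorem firstHalf_joinHalves {m : ℕ} (a b : Fin m → ℂ) : firstHalf (joinHalves a b) = a := by
  ext i
  exact Fin.append_left a b i

theorem secondHalf_joinHalves {m : ℕ} (a b : Fin m → ℂ) : secondHalf (joinHalves a b) = b := by
  ext i
  exact Fin.append_right a b i

theorem joinHalves_firstHalf_secondHalf {m : ℕ} (w : Fin (2 * m) → ℂ) :
    joinHalves (firstHalf w) (secondHalf w) = w := by
  ext i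
  obtain ⟨i, rfl⟩ := (finCongr (two_mul m).symm).surjective i
  refine Fin.addCases (fun i => ?_) (fun i => ?_) i
  · exact Fin.append_left _ _ i
  · exact Fin.append_right _ _ i

theorem range_append {k l : ℕ} (a : Fin k → ℂ) (c : Fin l → ℂ) :
    Set.range (Fin.append a c) = Set.range a ∪ Set.range c := by
  refine Set.Subset.antisymm ?_ (Set.union_subset ?_ ?_)
  · rintro _ ⟨i, rfl⟩
    refine Fin.addCases (fun i => ?_) (fun i => ?_) i
    · exact Or.inl ⟨i, (Fin.append_left a c i).symm⟩
    · exact Or.inr ⟨i, (Fin.append_right a c i).symm⟩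
  · rintro _ ⟨i, rfl⟩
    exact ⟨_, Fin.append_left a c i⟩
  · rintro _ ⟨i, rfl⟩
    exact ⟨_, Fin.append_right a c i⟩

theorem range_joinHalves {m : ℕ} (a b : Fin m → ℂ) :
    Set.range (joinHalves a b) = Set.range a ∪ Set.range b := by
  have h := (finCongr (two_mul m)).surjective.range_comp (Fin.append a b)
  exact h.trans (range_append a b)

theorem vdm_joinHalves {m : ℕ} (a b : Fin m → ℂ) :
    vdm (joinHalves a b) = vdm a * vdm b * ∏ i, ∏ j, (b j - a i) := by
  have hcast : ∀ {n n' : ℕ} (h : n = n') (y : Fin n' → ℂ), vdm (y ∘ Fin.cast h) = vdm y := by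
    rintro n _ rfl y
    rfl
  rw [joinHalves, hcast, vdm_append]

theorem prod_joinHalves {m : ℕ} (a b : Fin m → ℂ) :
    ∏ r, joinHalves a b r = (∏ i, a i) * ∏ j, b j := by
  have h : ∏ r, joinHalves a b r = ∏ r, Fin.append a b r :=
    Fintype.prod_equiv (finCongr (two_mul m)) _ _ fun _ => rfl
  rw [h, Fin.prod_univ_add]
  simp only [Fin.append_left, Fin.append_right]

/-- The rational function `F` for which `h(w,w') = ww'(F(w') - F(w))/(w - w')`. -/
def bezoutFun (ζ w : ℂ) : ℂ := (1 + (3 + ζ ^ 2) * w ^ 2 - (1 - ζ ^ 2) * w ^ 3) / w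

theorem hpol_eq_bezoutFun {ζ w w' : ℂ} (hw : w ≠ 0) (hw' : w' ≠ 0) (h : w ≠ w') :
    hpol ζ w w' = -1 * (w * w' * ((bezoutFun ζ w' - bezoutFun ζ w) / (w' - w))) := by
  have : w' - w ≠ 0 := sub_ne_zero.2 h.symm
  rw [hpol, bezoutFun, bezoutFun]
  field_simp
  ring

/-- A set of nonzero numbers on which `h(w,w') ≠ 0` for distinct `w`, `w'`. -/
def IsGeneric (ζ : ℂ) (S : Set ℂ) : Prop :=
  (∀ p ∈ S, p ≠ 0) ∧ ∀ p ∈ S, ∀ q ∈ S, p ≠ q → hpol ζ p q ≠ 0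

theorem IsGeneric.injOn_bezoutFun {ζ : ℂ} {S : Set ℂ} (hS : IsGeneric ζ S) :
    Set.InjOn (bezoutFun ζ) S := by
  intro p hp q hq h
  by_contra hne
  refine hS.2 p hp q hq hne ?_
  rw [hpol_eq_bezoutFun (hS.1 p hp) (hS.1 q hq) hne, h]
  simp

/-- The identification of two copies of `Fin m` with `Fin (2 * m)`. -/
def halvesEquiv (m : ℕ) : Fin m ⊕ Fin m ≃ Fin (2 * m) :=
  finSumFinEquiv.trans (finCongr (two_mul m).symm)

/-- The matrix with rows `(1, F, …, F^{m-1}, w, wF, …, wF^{m-1})`. -/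
def doubleVandermonde (ζ : ℂ) {m : ℕ} (w : Fin (2 * m) → ℂ) :
    Matrix (Fin (2 * m)) (Fin (2 * m)) ℂ :=
  Matrix.of fun r c => Sum.elim (fun j : Fin m => bezoutFun ζ (w r) ^ (j : ℕ))
    (fun j : Fin m => w r * bezoutFun ζ (w r) ^ (j : ℕ)) ((halvesEquiv m).symm c)

theorem det_doubleVandermonde_comp_perm (ζ : ℂ) {m : ℕ} (w : Fin (2 * m) → ℂ)
    (σ : Equiv.Perm (Fin (2 * m))) :
    (doubleVandermonde ζ (w ∘ σ)).det
      = (Equiv.Perm.sign σ : ℂ) * (doubleVandermonde ζ w).det := by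
  rw [← Matrix.det_permute]
  rfl

theorem det_doubleVandermonde_joinHalves (ζ : ℂ) {m : ℕ} (a b : Fin m → ℂ) :
    (doubleVandermonde ζ (joinHalves a b)).det
      = (Matrix.fromBlocks (Matrix.vandermonde (bezoutFun ζ ∘ a))
          (Matrix.diagonal a * Matrix.vandermonde (bezoutFun ζ ∘ a))
          (Matrix.vandermonde (bezoutFun ζ ∘ b))
          (Matrix.diagonal b * Matrix.vandermonde (bezoutFun ζ ∘ b))).det := by
  rw [← Matrix.det_submatrix_equiv_self (halvesEquiv m)]
  have hl : ∀ i, joinHalves a b (halvesEquiv m (Sum.inl i)) = a i := Fin.append_left a b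
  have hr : ∀ i, joinHalves a b (halvesEquiv m (Sum.inr i)) = b i := Fin.append_right a b
  congr 1
  ext (i | i) (j | j) <;>
    simp [doubleVandermonde, Matrix.diagonal_mul, Matrix.vandermonde_apply, hl, hr]

/-- On generic tuples, the determinant ratio is a manifestly symmetric expression. -/
theorem Hratio_joinHalves_eq (ζ : ℂ) {m : ℕ} (a b : Fin m → ℂ)
    (hinj : Function.Injective (joinHalves a b)) (hgen : IsGeneric ζ (Set.range (joinHalves a b))) :
    Hratio ζ m (joinHalves a b)
      = (∏ _i : Fin m, ∏ _j : Fin m, (-1 : ℂ)) * (∏ _i : Fin m, (-1 : ℂ))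
        * (∏ i : Fin m, ∏ _j ∈ Finset.Ioi i, (-1 : ℂ))
        * ((∏ r, joinHalves a b r) ^ m * (∏ r, joinHalves a b r)⁻¹)
        * ((doubleVandermonde ζ (joinHalves a b)).det / vdm (joinHalves a b)) := by
  have ha : ∀ i, a i ∈ Set.range (joinHalves a b) := fun i => by
    rw [range_joinHalves]; exact Or.inl ⟨i, rfl⟩
  have hb : ∀ i, b i ∈ Set.range (joinHalves a b) := fun i => by
    rw [range_joinHalves]; exact Or.inr ⟨i, rfl⟩
  have hab : ∀ i j, a i ≠ b j := by
    intro i j h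
    have hl : joinHalves a b (halvesEquiv m (Sum.inl i)) = a i := Fin.append_left a b i
    have hr : joinHalves a b (halvesEquiv m (Sum.inr j)) = b j := Fin.append_right a b j
    have := (halvesEquiv m).injective (hinj (hl.trans (h.trans hr.symm)))
    simp at this
  have hainj : Function.Injective a := by
    intro i j h
    have hl : ∀ i, joinHalves a b (halvesEquiv m (Sum.inl i)) = a i := Fin.append_left a b
    exact Sum.inl_injective ((halvesEquiv m).injective (hinj ((hl i).trans (h.trans (hl j).symm))))
  have hFinj : Function.Injective (bezoutFun ζ ∘ a) := fun i j h =>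
    hainj (hgen.injOn_bezoutFun (ha i) (ha j) h)
  have hFne : ∀ i j, (bezoutFun ζ ∘ b) j ≠ (bezoutFun ζ ∘ a) i := fun i j h =>
    hab i j (hgen.injOn_bezoutFun (hb j) (ha i) h).symm
  have hh : ∀ i j, hpol ζ (a i) (b j) = -1 * (a i * b j *
      ((bezoutFun ζ (b j) - bezoutFun ζ (a i)) / (b j - a i))) := fun i j =>
    hpol_eq_bezoutFun (hgen.1 _ (ha i)) (hgen.1 _ (hb j)) (hab i j)
  have hdet : (Matrix.of fun i j : Fin m => (hpol ζ (a i) (b j))⁻¹).det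
      = (∏ i, (a i)⁻¹) * (∏ j, (b j)⁻¹) * (∏ _i : Fin m, (-1 : ℂ))
        * (Matrix.of fun j i : Fin m =>
          (b j - a i) / ((bezoutFun ζ ∘ b) j - (bezoutFun ζ ∘ a) i)).det := by
    have hM : (Matrix.of fun i j : Fin m => (hpol ζ (a i) (b j))⁻¹)
        = Matrix.of fun i j => (a i)⁻¹ * (Matrix.of fun i j => (-(b j)⁻¹) *
          (Matrix.of fun j i : Fin m =>
            (b j - a i) / ((bezoutFun ζ ∘ b) j - (bezoutFun ζ ∘ a) i)).transpose i j) i j := by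
      ext i j
      simp only [Matrix.of_apply, Matrix.transpose_apply, hh, Function.comp]
      simp only [div_eq_mul_inv, mul_inv, inv_inv, inv_neg, inv_one]
      ring
    rw [hM, Matrix.det_mul_column, Matrix.det_mul_row, Matrix.det_transpose]
    have : ∏ j, -(b j)⁻¹ = (∏ j, (b j)⁻¹) * (∏ _i : Fin m, (-1 : ℂ)) := by
      rw [← Finset.prod_mul_distrib]
      exact Finset.prod_congr rfl fun _ _ => by ring
    rw [this]
    ring
  rw [Hratio, firstHalf_joinHalves, secondHalf_joinHalves, hdet, det_doubleVandermonde_joinHalves,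
    det_double_vandermonde _ _ _ _ hFinj hFne, vdm_joinHalves, prod_joinHalves]
  have hprod : ∏ i, ∏ j, hpol ζ (a i) (b j)
      = (∏ _i : Fin m, ∏ _j : Fin m, (-1 : ℂ)) * (((∏ i, a i) * ∏ j, b j) ^ m
        * ((∏ j, ∏ i, ((bezoutFun ζ ∘ b) j - (bezoutFun ζ ∘ a) i)) / ∏ i, ∏ j, (b j - a i))) := by
    simp only [hh, Finset.prod_mul_distrib, Finset.prod_div_distrib, Finset.prod_const,
      Finset.card_univ, Fintype.card_fin, Function.comp, mul_pow]
    rw [Finset.prod_comm (f := fun i j => bezoutFun ζ (b j) - bezoutFun ζ (a i)),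
      Finset.prod_pow]
  rw [hprod]
  have hsq : (∏ i : Fin m, ∏ _j ∈ Finset.Ioi i, (-1 : ℂ))
      * (∏ i : Fin m, ∏ _j ∈ Finset.Ioi i, (-1 : ℂ)) = 1 := by
    simp only [← Finset.prod_mul_distrib]
    simp
  generalize (∏ i : Fin m, ∏ _j ∈ Finset.Ioi i, (-1 : ℂ)) = s at hsq
  simp only [Finset.prod_inv_distrib, div_eq_mul_inv, mul_inv]
  generalize (Matrix.of fun j i : Fin m =>
    (b j - a i) * ((bezoutFun ζ ∘ b) j - (bezoutFun ζ ∘ a) i)⁻¹).det = D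
  generalize (∏ _i : Fin m, ∏ _j : Fin m, (-1 : ℂ)) = e₁
  generalize (∏ _i : Fin m, (-1 : ℂ)) = e₂
  generalize ((∏ i, a i) * ∏ j, b j) ^ m = p
  generalize (∏ i, a i)⁻¹ = q₁
  generalize (∏ i, b i)⁻¹ = q₂
  generalize (∏ j, ∏ i, ((bezoutFun ζ ∘ b) j - (bezoutFun ζ ∘ a) i)) = f
  generalize (∏ i, ∏ j, (b j - a i))⁻¹ = g
  linear_combination (-(e₁ * e₂ * p * q₁ * q₂ * f * D * (vdm a)⁻¹ * (vdm b)⁻¹ * g)) * hsq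

theorem Hratio_comp_perm (ζ : ℂ) {m : ℕ} (w : Fin (2 * m) → ℂ) (hinj : Function.Injective w)
    (hgen : IsGeneric ζ (Set.range w)) (σ : Equiv.Perm (Fin (2 * m))) :
    Hratio ζ m (w ∘ σ) = Hratio ζ m w := by
  have h1 := Hratio_joinHalves_eq ζ (firstHalf w) (secondHalf w)
  have h2 := Hratio_joinHalves_eq ζ (firstHalf (w ∘ σ)) (secondHalf (w ∘ σ))
  rw [joinHalves_firstHalf_secondHalf] at h1 h2
  rw [h1 hinj hgen, h2 (hinj.comp σ.injective) (by rwa [σ.surjective.range_comp]),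
    det_doubleVandermonde_comp_perm, vdm_comp_perm]
  have hp : ∏ r, (w ∘ σ) r = ∏ r, w r := Equiv.prod_comp σ w
  have hs : (Equiv.Perm.sign σ : ℂ) ≠ 0 := by
    rcases Int.units_eq_one_or (Equiv.Perm.sign σ) with h | h <;> simp [h]
  rw [hp, mul_div_mul_left _ _ hs]

/-- On generic tuples, the determinant ratio depends only on the set of entries. -/
theorem Hratio_eq_of_range_subset (ζ : ℂ) {m : ℕ} (w w' : Fin (2 * m) → ℂ)
    (hinj : Function.Injective w) (hgen : IsGeneric ζ (Set.range w))
    (hsub : Set.range w ⊆ Set.range w') : Hratio ζ m w = Hratio ζ m w' := by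
  choose f hf using fun i => hsub ⟨i, rfl⟩
  have hfinj : Function.Injective f := fun i j h => hinj (by rw [← hf i, ← hf j, h])
  let σ : Equiv.Perm (Fin (2 * m)) :=
    Equiv.ofBijective f (Finite.injective_iff_bijective.1 hfinj)
  have hw : w ∘ σ.symm = w' := by
    ext i
    obtain ⟨i, rfl⟩ := σ.surjective i
    simpa [σ] using (hf i).symm
  rw [← hw, Hratio_comp_perm ζ w hinj hgen]

/-! ### The quadratic relation for the determinant ratio -/

theorem det_append {k l : ℕ} (f : ℂ → ℂ → ℂ) (a b : Fin k → ℂ) (c d : Fin l → ℂ) :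
    (Matrix.of fun i j : Fin (k + l) => f (Fin.append a c i) (Fin.append b d j)).det
      = (Matrix.fromBlocks (Matrix.of fun i j => f (a i) (b j)) (Matrix.of fun i j => f (a i) (d j))
          (Matrix.of fun i j => f (c i) (b j)) (Matrix.of fun i j => f (c i) (d j))).det := by
  rw [← Matrix.det_submatrix_equiv_self finSumFinEquiv]
  congr 1
  ext (i | i) (j | j) <;> simp

theorem Hratio_joinHalves_append (ζ : ℂ) {k l : ℕ} (a b : Fin k → ℂ) (c d : Fin l → ℂ) :
    Hratio ζ (k + l) (joinHalves (Fin.append a c) (Fin.append b d))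
      = ((∏ i, ∏ j, hpol ζ (a i) (b j)) * (∏ i, ∏ j, hpol ζ (a i) (d j))
          * ((∏ i, ∏ j, hpol ζ (c i) (b j)) * ∏ i, ∏ j, hpol ζ (c i) (d j)))
        / ((vdm a * vdm c * ∏ i, ∏ j, (c j - a i)) * (vdm b * vdm d * ∏ i, ∏ j, (d j - b i)))
        * (Matrix.fromBlocks (Matrix.of fun i j => (hpol ζ (a i) (b j))⁻¹)
          (Matrix.of fun i j => (hpol ζ (a i) (d j))⁻¹)
          (Matrix.of fun i j => (hpol ζ (c i) (b j))⁻¹)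
          (Matrix.of fun i j => (hpol ζ (c i) (d j))⁻¹)).det := by
  rw [Hratio, firstHalf_joinHalves, secondHalf_joinHalves, vdm_append, vdm_append,
    det_append fun p q => (hpol ζ p q)⁻¹]
  simp only [Fin.prod_univ_add, Fin.append_left, Fin.append_right, Finset.prod_mul_distrib]
  ring

theorem Hratio_desnanot_jacobi (ζ : ℂ) {k : ℕ} (a b : Fin k → ℂ) (c d : Fin 2 → ℂ)
    (hc : c 0 ≠ c 1) (hd : d 0 ≠ d 1) :
    (c 0 - c 1) * (d 0 - d 1)
        * Hratio ζ (k + 2) (joinHalves (Fin.append a c) (Fin.append b d))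
        * Hratio ζ k (joinHalves a b)
      = hpol ζ (c 0) (d 1) * hpol ζ (c 1) (d 0)
          * Hratio ζ (k + 1)
            (joinHalves (Fin.append a fun _ : Fin 1 => c 0) (Fin.append b fun _ : Fin 1 => d 0))
          * Hratio ζ (k + 1)
            (joinHalves (Fin.append a fun _ : Fin 1 => c 1) (Fin.append b fun _ : Fin 1 => d 1))
        - hpol ζ (c 0) (d 0) * hpol ζ (c 1) (d 1)
          * Hratio ζ (k + 1)
            (joinHalves (Fin.append a fun _ : Fin 1 => c 0) (Fin.append b fun _ : Fin 1 => d 1))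
          * Hratio ζ (k + 1)
            (joinHalves (Fin.append a fun _ : Fin 1 => c 1) (Fin.append b fun _ : Fin 1 => d 0)) := by
  have key := desnanot_jacobi (Matrix.of fun i j => (hpol ζ (a i) (b j))⁻¹)
    (Matrix.of fun i j => (hpol ζ (a i) (d j))⁻¹)
    (Matrix.of fun i j => (hpol ζ (c i) (b j))⁻¹)
    (Matrix.of fun i j => (hpol ζ (c i) (d j))⁻¹)
  have hb : ∀ i j, Hratio ζ (k + 1)
      (joinHalves (Fin.append a fun _ : Fin 1 => c i) (Fin.append b fun _ : Fin 1 => d j))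
      = ((∏ i, ∏ j, hpol ζ (a i) (b j)) * (∏ l, hpol ζ (a l) (d j))
          * ((∏ l, hpol ζ (c i) (b l)) * hpol ζ (c i) (d j)))
        / ((vdm a * ∏ l, (c i - a l)) * (vdm b * ∏ l, (d j - b l)))
        * borderedDet (Matrix.of fun i j => (hpol ζ (a i) (b j))⁻¹)
          (Matrix.of fun i j => (hpol ζ (a i) (d j))⁻¹)
          (Matrix.of fun i j => (hpol ζ (c i) (b j))⁻¹)
          (Matrix.of fun i j => (hpol ζ (c i) (d j))⁻¹) i j := by
    intro i j
    have h1 : ∀ p : ℂ, vdm (fun _ : Fin 1 => p) = 1 := fun p => by simp [vdm]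
    rw [Hratio_joinHalves_append, h1, h1]
    simp only [Fin.prod_univ_one, mul_one]
    rfl
  have hv : ∀ c : Fin 2 → ℂ, vdm c = c 1 - c 0 := fun c => by simp [vdm, Fin.prod_univ_two]
  have hc' : (c 0 - c 1) * (c 1 - c 0)⁻¹ = -1 := by
    rw [← neg_sub, neg_mul, mul_inv_cancel₀ (sub_ne_zero.2 hc.symm)]
  have hd' : (d 0 - d 1) * (d 1 - d 0)⁻¹ = -1 := by
    rw [← neg_sub, neg_mul, mul_inv_cancel₀ (sub_ne_zero.2 hd.symm)]
  rw [hb, hb, hb, hb, Hratio_joinHalves_append, Hratio, firstHalf_joinHalves,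
    secondHalf_joinHalves, hv, hv]
  simp only [Fin.prod_univ_two, Finset.prod_mul_distrib, div_eq_mul_inv, mul_inv]
  generalize (Matrix.fromBlocks (Matrix.of fun i j => (hpol ζ (a i) (b j))⁻¹)
    (Matrix.of fun i j => (hpol ζ (a i) (d j))⁻¹) (Matrix.of fun i j => (hpol ζ (c i) (b j))⁻¹)
    (Matrix.of fun i j => (hpol ζ (c i) (d j))⁻¹)).det = D₂ at key ⊢
  generalize (Matrix.of fun i j => (hpol ζ (a i) (b j))⁻¹).det = D₀ at key ⊢
  generalize borderedDet _ _ _ _ 0 0 = D₀₀ at key ⊢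
  generalize borderedDet _ _ _ _ 1 1 = D₁₁ at key ⊢
  generalize borderedDet _ _ _ _ 0 1 = D₀₁ at key ⊢
  generalize borderedDet _ _ _ _ 1 0 = D₁₀ at key ⊢
  generalize (c 1 - c 0)⁻¹ = ci at hc' ⊢
  generalize (d 1 - d 0)⁻¹ = di at hd' ⊢
  generalize c 0 - c 1 = cd at hc' ⊢
  generalize d 0 - d 1 = dd at hd' ⊢
  have hcd : cd * ci * (dd * di) = 1 := by rw [hc', hd']; norm_num
  generalize (∏ i, ∏ j, hpol ζ (a i) (b j)) = P
  generalize (∏ i, hpol ζ (a i) (d 0)) = p₁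
  generalize (∏ i, hpol ζ (a i) (d 1)) = p₂
  generalize (∏ i, hpol ζ (c 0) (b i)) = p₃
  generalize (∏ i, hpol ζ (c 1) (b i)) = p₄
  generalize (∏ i, (c 0 - a i))⁻¹ = q₁
  generalize (∏ i, (c 1 - a i))⁻¹ = q₂
  generalize (∏ i, (d 0 - b i))⁻¹ = q₃
  generalize (∏ i, (d 1 - b i))⁻¹ = q₄
  generalize (vdm a)⁻¹ = va
  generalize (vdm b)⁻¹ = vb
  generalize hpol ζ (c 0) (d 0) = h₀₀
  generalize hpol ζ (c 0) (d 1) = h₀₁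
  generalize hpol ζ (c 1) (d 0) = h₁₀
  generalize hpol ζ (c 1) (d 1) = h₁₁
  linear_combination (P ^ 2 * p₁ * p₂ * p₃ * p₄ * h₀₀ * h₀₁ * h₁₀ * h₁₁ * va ^ 2 * vb ^ 2
    * q₁ * q₂ * q₃ * q₄) * (key + D₂ * D₀ * hcd)

/-! ### Polynomial functions -/

/-- Functions given by the evaluation of a polynomial. -/
def IsPolyFun {ι : Type*} (f : (ι → ℂ) → ℂ) : Prop :=
  ∃ P : MvPolynomial ι ℂ, ∀ z, f z = MvPolynomial.eval z P

namespace IsPolyFun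

variable {ι κ : Type*} {f g : (ι → ℂ) → ℂ}

theorem const (c : ℂ) : IsPolyFun fun _ : ι → ℂ => c := ⟨MvPolynomial.C c, by simp⟩

theorem coord (i : ι) : IsPolyFun fun z : ι → ℂ => z i := ⟨MvPolynomial.X i, by simp⟩

theorem add (hf : IsPolyFun f) (hg : IsPolyFun g) : IsPolyFun fun z => f z + g z := by
  obtain ⟨P, hP⟩ := hf
  obtain ⟨Q, hQ⟩ := hg
  exact ⟨P + Q, fun z => by simp [hP, hQ]⟩

theorem mul (hf : IsPolyFun f) (hg : IsPolyFun g) : IsPolyFun fun z => f z * g z := by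
  obtain ⟨P, hP⟩ := hf
  obtain ⟨Q, hQ⟩ := hg
  exact ⟨P * Q, fun z => by simp [hP, hQ]⟩

theorem sub (hf : IsPolyFun f) (hg : IsPolyFun g) : IsPolyFun fun z => f z - g z := by
  obtain ⟨P, hP⟩ := hf
  obtain ⟨Q, hQ⟩ := hg
  exact ⟨P - Q, fun z => by simp [hP, hQ]⟩

theorem comp {F : (κ → ℂ) → ℂ} (hF : IsPolyFun F) {e : (ι → ℂ) → κ → ℂ}
    (he : ∀ j, IsPolyFun fun z => e z j) : IsPolyFun fun z => F (e z) := by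
  obtain ⟨P, hP⟩ := hF
  choose Q hQ using he
  refine ⟨MvPolynomial.bind₁ Q P, fun z => ?_⟩
  simp only [hP]
  rw [MvPolynomial.eval, MvPolynomial.eval, MvPolynomial.eval₂Hom_bind₁]
  congr 2
  exact funext fun j => hQ j z

theorem hpol {ζ : ℂ} (hf : IsPolyFun f) (hg : IsPolyFun g) :
    IsPolyFun fun z => hpol ζ (f z) (g z) :=
  ((const 1).sub (((const (3 + ζ ^ 2)).mul hf).mul hg)).add
    ((((const (1 - ζ ^ 2)).mul hf).mul hg).mul (hf.add hg))

theorem eq_of_eq_on_generic {n : ℕ} {f g : (Fin n → ℂ) → ℂ} (hf : IsPolyFun f) (hg : IsPolyFun g)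
    (ζ : ℂ) (h : ∀ z, Function.Injective z → IsGeneric ζ (Set.range z) → f z = g z) : f = g := by
  obtain ⟨P, hP⟩ := hf
  obtain ⟨Q, hQ⟩ := hg
  have hpoly : ∀ i j : Fin n, ∃ R : MvPolynomial (Fin n) ℂ, R ≠ 0 ∧
      ∀ z, MvPolynomial.eval z R ≠ 0 → z i ≠ 0 ∧
        (i ≠ j → z i ≠ z j ∧ _root_.hpol ζ (z i) (z j) ≠ 0) := by
    intro i j
    obtain ⟨R, hR⟩ := (coord i).hpol (ζ := ζ) (coord j)
    have hR0 : R ≠ 0 := by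
      rintro rfl
      have := hR 0
      simp [_root_.hpol] at this
    have hX : (MvPolynomial.X i : MvPolynomial (Fin n) ℂ) ≠ 0 := MvPolynomial.X_ne_zero i
    by_cases hij : i = j
    · exact ⟨_, hX, fun z hz => ⟨by simpa using hz, fun h => absurd hij h⟩⟩
    · have hsub : (MvPolynomial.X i - MvPolynomial.X j : MvPolynomial (Fin n) ℂ) ≠ 0 :=
        sub_ne_zero.2 fun h => hij (MvPolynomial.X_injective h)
      refine ⟨MvPolynomial.X i * ((MvPolynomial.X i - MvPolynomial.X j) * R),
        mul_ne_zero hX (mul_ne_zero hsub hR0), fun z hz => ?_⟩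
      simp only [map_mul, map_sub, MvPolynomial.eval_X, mul_ne_zero_iff, sub_ne_zero, ← hR] at hz
      exact ⟨hz.1, fun _ => hz.2⟩
  choose R hR0 hR using hpoly
  have hprod : ∏ i, ∏ j, R i j ≠ 0 :=
    Finset.prod_ne_zero_iff.2 fun i _ => Finset.prod_ne_zero_iff.2 fun j _ => hR0 i j
  have hzero : (P - Q) * ∏ i, ∏ j, R i j = 0 := by
    refine MvPolynomial.funext fun z => ?_
    rw [map_mul, map_zero]
    by_cases hz : MvPolynomial.eval z (∏ i, ∏ j, R i j) = 0
    · rw [hz, mul_zero]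
    · have hz' : ∀ i j, MvPolynomial.eval z (R i j) ≠ 0 := fun i j => by
        simp only [map_prod] at hz
        exact Finset.prod_ne_zero_iff.1 (Finset.prod_ne_zero_iff.1 hz i (Finset.mem_univ i)) j
          (Finset.mem_univ j)
      have hinj : Function.Injective z := fun i j hij => by
        by_contra hne
        exact ((hR i j z (hz' i j)).2 hne).1 hij
      have hgen : IsGeneric ζ (Set.range z) := by
        constructor
        · rintro _ ⟨i, rfl⟩
          exact (hR i i z (hz' i i)).1
        · rintro _ ⟨i, rfl⟩ _ ⟨j, rfl⟩ hne
          exact ((hR i j z (hz' i j)).2 fun h => hne (congrArg z h)).2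
      rw [map_sub, ← hP, ← hQ, h z hinj hgen, sub_self, zero_mul]
  have hPQ : P = Q := sub_eq_zero.1 ((mul_eq_zero.1 hzero).resolve_right hprod)
  exact funext fun z => by rw [hP, hQ, hPQ]

end IsPolyFun

/-! ### The quadratic relation for the polynomials `H_{2k}` -/

theorem hpol_comm (ζ p q : ℂ) : hpol ζ p q = hpol ζ q p := by
  rw [hpol, hpol]
  ring

theorem IsGeneric.mono {ζ : ℂ} {S T : Set ℂ} (hT : IsGeneric ζ T) (h : S ⊆ T) : IsGeneric ζ S :=
  ⟨fun p hp => hT.1 p (h hp), fun p hp q hq => hT.2 p (h hp) q (h hq)⟩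

theorem HratioDefined_of_isGeneric {ζ : ℂ} {m : ℕ} {w : Fin (2 * m) → ℂ}
    (hinj : Function.Injective w) (hgen : IsGeneric ζ (Set.range w)) : HratioDefined ζ m w := by
  refine ⟨fun i j hij h => hij ?_, fun i j hij h => hij ?_, fun i j => ?_⟩
  · exact Fin.ext (congrArg Fin.val (hinj h) :)
  · have := Fin.ext_iff.1 (hinj h)
    simp only [Nat.add_left_cancel_iff] at this
    exact Fin.ext this
  · refine hgen.2 _ ⟨_, rfl⟩ _ ⟨_, rfl⟩ fun h => ?_
    have := Fin.ext_iff.1 (hinj h)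
    have := i.2
    simp only at *
    omega

/-- The first `2k` of `2(k+2)` indices. -/
def headIdx (k : ℕ) : Fin (2 * k) → Fin (2 * (k + 2)) := fun j => ⟨j, by have := j.2; omega⟩

/-- The last four of `2(k+2)` indices. -/
def tailIdx (k : ℕ) (p : Fin 4) : Fin (2 * (k + 2)) := ⟨2 * k + p, by have := p.2; omega⟩

/-- The first `2k` of `2(k+2)` indices together with two of the last four. -/
def pickIdx (k : ℕ) (p q : Fin 4) : Fin (2 * (k + 1)) → Fin (2 * (k + 2)) := fun j =>
  if h : (j : ℕ) < 2 * k then headIdx k ⟨j, h⟩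
  else if (j : ℕ) = 2 * k then tailIdx k p else tailIdx k q

theorem pickIdx_injective (k : ℕ) {p q : Fin 4} (hpq : p ≠ q) :
    Function.Injective (pickIdx k p q) := by
  intro i j h
  have hpq' : (p : ℕ) ≠ q := fun h => hpq (Fin.ext h)
  have hi := i.2
  have hj := j.2
  have h' := Fin.ext_iff.1 h
  apply Fin.ext
  simp only [pickIdx, headIdx, tailIdx] at h'
  split_ifs at h' <;> simp only at h' <;> omega

theorem extL_eq_comp_pickIdx {k : ℕ} (z : Fin (2 * (k + 2)) → ℂ) (p q : Fin 4) :
    extL (z ∘ headIdx k) [z (tailIdx k p), z (tailIdx k q)] = z ∘ pickIdx k p q := by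
  ext j
  have hj := j.2
  simp only [extL, pickIdx, Function.comp]
  split_ifs with h1 h2
  · rfl
  · simp [h2]
  · have : (j : ℕ) - 2 * k = 1 := by omega
    simp [this]

theorem range_comp_pickIdx_subset {k : ℕ} (z : Fin (2 * (k + 2)) → ℂ) (p q : Fin 4) {s t : ℂ}
    (hp : z (tailIdx k p) = s ∨ z (tailIdx k p) = t)
    (hq : z (tailIdx k q) = s ∨ z (tailIdx k q) = t) :
    Set.range (z ∘ pickIdx k p q)
      ⊆ Set.range (joinHalves (Fin.append (firstHalf (z ∘ headIdx k)) fun _ : Fin 1 => s)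
        (Fin.append (secondHalf (z ∘ headIdx k)) fun _ : Fin 1 => t)) := by
  have hw := range_joinHalves (firstHalf (z ∘ headIdx k)) (secondHalf (z ∘ headIdx k))
  rw [joinHalves_firstHalf_secondHalf] at hw
  have hw' : ∀ i, z (headIdx k i) ∈ Set.range (firstHalf (z ∘ headIdx k))
      ∪ Set.range (secondHalf (z ∘ headIdx k)) := fun i => hw ▸ ⟨i, rfl⟩
  rintro _ ⟨j, rfl⟩
  rw [range_joinHalves, range_append, range_append, Set.range_const, Set.range_const]
  simp only [Function.comp, pickIdx]
  split_ifs with h1 h2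
  · rcases hw' ⟨j, h1⟩ with h | h
    · exact Or.inl (Or.inl h)
    · exact Or.inr (Or.inl h)
  · rcases hp with h | h
    · exact Or.inl (Or.inr h)
    · exact Or.inr (Or.inr h)
  · rcases hq with h | h
    · exact Or.inl (Or.inr h)
    · exact Or.inr (Or.inr h)

theorem IsHFamily.comp_pickIdx_eq {ζ : ℂ} {H : (k : ℕ) → (Fin (2 * k) → ℂ) → ℂ}
    (hH : IsHFamily ζ H) {k : ℕ} {z : Fin (2 * (k + 2)) → ℂ} (hinj : Function.Injective z)
    (hgen : IsGeneric ζ (Set.range z)) {p q : Fin 4} (hpq : p ≠ q) {s t : ℂ}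
    (hp : z (tailIdx k p) = s ∨ z (tailIdx k p) = t)
    (hq : z (tailIdx k q) = s ∨ z (tailIdx k q) = t) :
    H (k + 1) (z ∘ pickIdx k p q)
      = Hratio ζ (k + 1) (joinHalves (Fin.append (firstHalf (z ∘ headIdx k)) fun _ : Fin 1 => s)
        (Fin.append (secondHalf (z ∘ headIdx k)) fun _ : Fin 1 => t)) := by
  have hinj' := hinj.comp (pickIdx_injective k hpq)
  have hgen' := hgen.mono (Set.range_comp_subset_range (pickIdx k p q) z)
  rw [hH.2.2 _ _ (HratioDefined_of_isGeneric hinj' hgen')]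
  exact Hratio_eq_of_range_subset ζ _ _ hinj' hgen' (range_comp_pickIdx_subset z p q hp hq)

theorem IsHFamily.quadratic_of_isGeneric {ζ : ℂ} {H : (k : ℕ) → (Fin (2 * k) → ℂ) → ℂ}
    (hH : IsHFamily ζ H) {k : ℕ} {z : Fin (2 * (k + 2)) → ℂ} (hinj : Function.Injective z)
    (hgen : IsGeneric ζ (Set.range z)) :
    (z (tailIdx k 0) - z (tailIdx k 2)) * (z (tailIdx k 1) - z (tailIdx k 3))
        * H (k + 2) z * H k (z ∘ headIdx k)
      = hpol ζ (z (tailIdx k 0)) (z (tailIdx k 3)) * hpol ζ (z (tailIdx k 1)) (z (tailIdx k 2))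
          * H (k + 1) (z ∘ pickIdx k 2 3) * H (k + 1) (z ∘ pickIdx k 0 1)
        - hpol ζ (z (tailIdx k 0)) (z (tailIdx k 1)) * hpol ζ (z (tailIdx k 2)) (z (tailIdx k 3))
          * H (k + 1) (z ∘ pickIdx k 1 2) * H (k + 1) (z ∘ pickIdx k 0 3) := by
  have htail : ∀ {p q : Fin 4}, p ≠ q → z (tailIdx k p) ≠ z (tailIdx k q) := by
    intro p q hpq h
    have := Fin.ext_iff.1 (hinj h)
    simp only [tailIdx, Nat.add_left_cancel_iff] at this
    exact hpq (Fin.ext this)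
  have key := Hratio_desnanot_jacobi ζ (firstHalf (z ∘ headIdx k)) (secondHalf (z ∘ headIdx k))
    ![z (tailIdx k 0), z (tailIdx k 2)] ![z (tailIdx k 1), z (tailIdx k 3)]
    (htail (by decide)) (htail (by decide))
  have hhead : Function.Injective (headIdx k) := fun i j h => Fin.ext (congrArg Fin.val h :)
  have hk : H k (z ∘ headIdx k)
      = Hratio ζ k (joinHalves (firstHalf (z ∘ headIdx k)) (secondHalf (z ∘ headIdx k))) := by
    rw [joinHalves_firstHalf_secondHalf]
    exact hH.2.2 _ _ (HratioDefined_of_isGeneric (hinj.comp hhead)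
      (hgen.mono (Set.range_comp_subset_range _ z)))
  have hk2 : H (k + 2) z
      = Hratio ζ (k + 2) (joinHalves
          (Fin.append (firstHalf (z ∘ headIdx k)) ![z (tailIdx k 0), z (tailIdx k 2)])
          (Fin.append (secondHalf (z ∘ headIdx k)) ![z (tailIdx k 1), z (tailIdx k 3)])) := by
    rw [hH.2.2 _ _ (HratioDefined_of_isGeneric hinj hgen)]
    refine Hratio_eq_of_range_subset ζ _ _ hinj hgen ?_
    have hw := range_joinHalves (firstHalf (z ∘ headIdx k)) (secondHalf (z ∘ headIdx k))
    rw [joinHalves_firstHalf_secondHalf] at hw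
    rintro _ ⟨j, rfl⟩
    rw [range_joinHalves, range_append, range_append]
    by_cases hj : (j : ℕ) < 2 * k
    · have : z j ∈ Set.range (firstHalf (z ∘ headIdx k))
          ∪ Set.range (secondHalf (z ∘ headIdx k)) := hw ▸ ⟨⟨j, hj⟩, rfl⟩
      rcases this with h | h
      · exact Or.inl (Or.inl h)
      · exact Or.inr (Or.inl h)
    · obtain ⟨p, rfl⟩ : ∃ p : Fin 4, j = tailIdx k p := by
        have := j.2
        exact ⟨⟨(j : ℕ) - 2 * k, by omega⟩, Fin.ext (by simp only [tailIdx]; omega)⟩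
      fin_cases p
      · exact Or.inl (Or.inr ⟨0, rfl⟩)
      · exact Or.inr (Or.inr ⟨0, rfl⟩)
      · exact Or.inl (Or.inr ⟨1, rfl⟩)
      · exact Or.inr (Or.inr ⟨1, rfl⟩)
  have h01 := hH.comp_pickIdx_eq hinj hgen (p := 0) (q := 1) (by decide) (Or.inl rfl) (Or.inr rfl)
  have h23 := hH.comp_pickIdx_eq hinj hgen (p := 2) (q := 3) (by decide) (Or.inl rfl) (Or.inr rfl)
  have h03 := hH.comp_pickIdx_eq hinj hgen (p := 0) (q := 3) (by decide) (Or.inl rfl) (Or.inr rfl)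
  have h12 := hH.comp_pickIdx_eq hinj hgen (p := 1) (q := 2) (by decide) (Or.inr rfl) (Or.inl rfl)
  rw [hk, hk2, h01, h23, h03, h12, hpol_comm ζ (z (tailIdx k 1)) (z (tailIdx k 2))]
  simp only [Matrix.cons_val_zero, Matrix.cons_val_one] at key
  linear_combination key

/-- The quadratic relation, in terms of the tuple of all `2(k+2)` variables. -/
theorem IsHFamily.quadratic {ζ : ℂ} {H : (k : ℕ) → (Fin (2 * k) → ℂ) → ℂ}
    (hH : IsHFamily ζ H) {k : ℕ} (z : Fin (2 * (k + 2)) → ℂ) :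
    (z (tailIdx k 0) - z (tailIdx k 2)) * (z (tailIdx k 1) - z (tailIdx k 3))
        * H (k + 2) z * H k (z ∘ headIdx k)
      = hpol ζ (z (tailIdx k 0)) (z (tailIdx k 3)) * hpol ζ (z (tailIdx k 1)) (z (tailIdx k 2))
          * H (k + 1) (z ∘ pickIdx k 2 3) * H (k + 1) (z ∘ pickIdx k 0 1)
        - hpol ζ (z (tailIdx k 0)) (z (tailIdx k 1)) * hpol ζ (z (tailIdx k 2)) (z (tailIdx k 3))
          * H (k + 1) (z ∘ pickIdx k 1 2) * H (k + 1) (z ∘ pickIdx k 0 3) := by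
  have hpoly : ∀ {m : ℕ} (e : Fin (2 * m) → Fin (2 * (k + 2))),
      IsPolyFun fun z : Fin (2 * (k + 2)) → ℂ => H m (z ∘ e) := fun {m} e =>
    IsPolyFun.comp (hH.2.1 m) fun j => IsPolyFun.coord (e j)
  have hcoord : ∀ p, IsPolyFun fun z : Fin (2 * (k + 2)) → ℂ => z (tailIdx k p) :=
    fun p => IsPolyFun.coord _
  refine congrFun (IsPolyFun.eq_of_eq_on_generic ?_ ?_ ζ
    fun z hinj hgen => hH.quadratic_of_isGeneric hinj hgen) z
  · exact ((((hcoord 0).sub (hcoord 2)).mul ((hcoord 1).sub (hcoord 3))).mul (hpoly id)).mul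
      (hpoly _)
  · exact (((((hcoord 0).hpol (hcoord 3)).mul ((hcoord 1).hpol (hcoord 2))).mul (hpoly _)).mul
      (hpoly _)).sub (((((hcoord 0).hpol (hcoord 1)).mul ((hcoord 2).hpol (hcoord 3))).mul
      (hpoly _)).mul (hpoly _))

theorem stmt5 (ζ : ℂ) (H : (k : ℕ) → (Fin (2*k) → ℂ) → ℂ) (hH : IsHFamily ζ H)
    (k : ℕ) (hk : 1 ≤ k) (w : Fin (2*k) → ℂ) (x y u v : ℂ) :
    (x - u) * (y - v) * H (k+2) (extL w [x, y, u, v]) * H k w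
      = hpol ζ x v * hpol ζ y u * H (k+1) (extL w [u, v]) * H (k+1) (extL w [x, y])
        - hpol ζ x y * hpol ζ u v * H (k+1) (extL w [y, u]) * H (k+1) (extL w [x, v]) := by
  set z : Fin (2 * (k + 2)) → ℂ := extL w [x, y, u, v] with hz
  have hhead : z ∘ headIdx k = w := by
    ext j
    simp [hz, extL, headIdx]
  have h0 : z (tailIdx k 0) = x := by simp [hz, extL, tailIdx]
  have h1 : z (tailIdx k 1) = y := by simp [hz, extL, tailIdx]
  have h2 : z (tailIdx k 2) = u := by simp [hz, extL, tailIdx]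
  have h3 : z (tailIdx k 3) = v := by simp [hz, extL, tailIdx]
  have key := hH.quadratic z
  simp only [← extL_eq_comp_pickIdx, hhead, h0, h1, h2, h3] at key
  exact key

end
end

section
/- For each integer k ≥ 0 and every ζ ≠ 1, writing ζ' = (ζ+3)/(ζ−1), the polynomial H_{2k} satisfies: H_{2k}(w₁,…,w_{2k}) evaluated with parameter ζ' equals (2/(ζ−1))^{k(k−1)} · H_{2k}(2w₁/(ζ−1), …, 2w_{2k}/(ζ−1)), the latter evaluated with parameter ζ. -/
noncomputable section

open Complex
open scoped BigOperators

/-- The parameter change `ζ ↦ (ζ+3)/(ζ-1)` amounts to a rescaling of both arguments of `h`. -/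
lemma hpol_moebius {ζ : ℂ} (hζ : ζ ≠ 1) (x y : ℂ) :
    hpol ((ζ + 3) / (ζ - 1)) x y = hpol ζ (2 * x / (ζ - 1)) (2 * y / (ζ - 1)) := by
  have h : ζ - 1 ≠ 0 := sub_ne_zero.mpr hζ
  unfold hpol
  field_simp
  ring

lemma prod_prod_lt_mul_self (c : ℂ) (k : ℕ) :
    (∏ i : Fin k, ∏ j : Fin k, if i < j then c else 1) *
      (∏ i : Fin k, ∏ j : Fin k, if i < j then c else 1) = c ^ (k * (k - 1)) := by
  conv_lhs =>
    arg 2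
    rw [Finset.prod_comm]
  simp_rw [← Finset.prod_mul_distrib]
  have h : ∀ i j : Fin k, ((if i < j then c else 1) * if j < i then c else 1)
      = if j ≠ i then c else 1 := by
    intro i j
    rcases lt_trichotomy i j with hij | hij | hij
    · simp [hij, hij.not_gt, hij.ne']
    · simp [hij]
    · simp [hij, hij.not_gt, hij.ne]
  simp_rw [h, Finset.prod_ite, Finset.prod_const_one, mul_one, Finset.prod_const,
    Finset.filter_ne', Finset.card_erase_of_mem (Finset.mem_univ _), Finset.card_univ,
    Fintype.card_fin]
  rw [Finset.prod_const, Finset.card_univ, Fintype.card_fin, ← pow_mul, mul_comm]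

lemma vdm_const_mul {k : ℕ} (c : ℂ) (y : Fin k → ℂ) :
    vdm (fun i => c * y i) = (∏ i : Fin k, ∏ j : Fin k, if i < j then c else 1) * vdm y := by
  unfold vdm
  simp_rw [← Finset.prod_mul_distrib]
  refine Finset.prod_congr rfl fun i _ => Finset.prod_congr rfl fun j _ => ?_
  split_ifs <;> ring

lemma Hratio_moebius {ζ : ℂ} (hζ : ζ ≠ 1) (k : ℕ) (w : Fin (2 * k) → ℂ) :
    Hratio ((ζ + 3) / (ζ - 1)) k w
      = (2 / (ζ - 1)) ^ (k * (k - 1)) * Hratio ζ k (fun i => 2 * w i / (ζ - 1)) := by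
  set c : ℂ := 2 / (ζ - 1) with hc
  have hc0 : c ≠ 0 := div_ne_zero two_ne_zero (sub_ne_zero.mpr hζ)
  have hmul : ∀ x : ℂ, 2 * x / (ζ - 1) = c * x := fun x => by rw [hc]; ring
  have hf : firstHalf (fun i => c * w i) = fun i => c * firstHalf w i := rfl
  have hs : secondHalf (fun i => c * w i) = fun i => c * secondHalf w i := rfl
  unfold Hratio
  simp only [hpol_moebius hζ, hmul, hf, hs, vdm_const_mul]
  rw [mul_mul_mul_comm, prod_prod_lt_mul_self, ← mul_assoc, ← mul_div_assoc,
    mul_div_mul_left _ _ (pow_ne_zero _ hc0)]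

lemma HratioDefined.moebius {ζ : ℂ} (hζ : ζ ≠ 1) {k : ℕ} {w : Fin (2 * k) → ℂ}
    (hw : HratioDefined ((ζ + 3) / (ζ - 1)) k w) :
    HratioDefined ζ k (fun i => 2 * w i / (ζ - 1)) := by
  have h : ζ - 1 ≠ 0 := sub_ne_zero.mpr hζ
  have hinj : ∀ x y : ℂ, 2 * x / (ζ - 1) = 2 * y / (ζ - 1) → x = y := fun x y hxy =>
    mul_left_cancel₀ two_ne_zero ((div_left_inj' h).mp hxy)
  refine ⟨fun i j hij e => hw.1 i j hij (hinj _ _ e),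
    fun i j hij e => hw.2.1 i j hij (hinj _ _ e), fun i j => ?_⟩
  have := hw.2.2 i j
  rwa [hpol_moebius hζ] at this

open MvPolynomial in
/-- The determinant ratio is defined off the zero set of a nonzero polynomial. -/
lemma exists_ne_zero_HratioDefined (ζ : ℂ) (k : ℕ) :
    ∃ D : MvPolynomial (Fin (2 * k)) ℂ, D ≠ 0 ∧ ∀ w, eval w D ≠ 0 → HratioDefined ζ k w := by
  let h : Fin (2 * k) → Fin (2 * k) → MvPolynomial (Fin (2 * k)) ℂ := fun a b =>
    1 - C (3 + ζ ^ 2) * X a * X b + C (1 - ζ ^ 2) * X a * X b * (X a + X b)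
  have heval : ∀ w a b, eval w (h a b) = hpol ζ (w a) (w b) := fun w a b => by
    simp [h, hpol]
  refine ⟨(∏ a, ∏ b, if a = b then 1 else X a - X b) * ∏ a, ∏ b, h a b, mul_ne_zero ?_ ?_, ?_⟩
  · refine Finset.prod_ne_zero_iff.mpr fun a _ => Finset.prod_ne_zero_iff.mpr fun b _ => ?_
    split_ifs with hab
    · exact one_ne_zero
    · exact sub_ne_zero.mpr fun e => hab (X_injective e)
  · refine Finset.prod_ne_zero_iff.mpr fun a _ => Finset.prod_ne_zero_iff.mpr fun b _ e => ?_
    have := heval 0 a b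
    simp [e, hpol] at this
  · intro w hw
    rw [map_mul] at hw
    obtain ⟨hX, hh⟩ := mul_ne_zero_iff.mp hw
    simp only [map_prod, Finset.prod_ne_zero_iff, heval] at hX hh
    have hne : ∀ a b, a ≠ b → w a ≠ w b := fun a b hab e => by
      simpa [hab, e] using hX a (Finset.mem_univ _) b (Finset.mem_univ _)
    refine ⟨fun i j hij => hne _ _ ?_, fun i j hij => hne _ _ ?_,
      fun i j => hh _ (Finset.mem_univ _) _ (Finset.mem_univ _)⟩
    · simpa [Fin.ext_iff] using hij
    · simpa [Fin.ext_iff] using hij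

open MvPolynomial in
lemma eq_of_eval_eq_of_eval_ne_zero {σ : Type*} {P Q D : MvPolynomial σ ℂ} (hD : D ≠ 0)
    (h : ∀ w, eval w D ≠ 0 → eval w P = eval w Q) : P = Q := by
  refine mul_right_cancel₀ hD (funext fun w => ?_)
  simp only [map_mul]
  by_cases hw : eval w D = 0
  · simp [hw]
  · rw [h w hw]

theorem stmt6 (H : ℂ → (k : ℕ) → (Fin (2*k) → ℂ) → ℂ) (hH : ∀ ζ, IsHFamily ζ (H ζ))
    (k : ℕ) (ζ : ℂ) (hζ : ζ ≠ 1) (w : Fin (2*k) → ℂ) :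
    H ((ζ+3)/(ζ-1)) k w
      = (2/(ζ-1)) ^ (k*(k-1)) * H ζ k (fun i => 2 * w i / (ζ-1)) := by
  obtain ⟨-, hP, hratio'⟩ := hH ((ζ+3)/(ζ-1))
  obtain ⟨-, hQ, hratio⟩ := hH ζ
  obtain ⟨P, hP⟩ := hP k
  obtain ⟨Q, hQ⟩ := hQ k
  obtain ⟨D, hD, hdef⟩ := exists_ne_zero_HratioDefined ((ζ+3)/(ζ-1)) k
  let R : MvPolynomial (Fin (2*k)) ℂ := MvPolynomial.C ((2/(ζ-1)) ^ (k*(k-1))) *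
    MvPolynomial.bind₁ (fun i => MvPolynomial.C (2/(ζ-1)) * MvPolynomial.X i) Q
  have hR : ∀ v, MvPolynomial.eval v R
      = (2/(ζ-1)) ^ (k*(k-1)) * H ζ k (fun i => 2 * v i / (ζ-1)) := by
    intro v
    simp only [R, hQ, map_mul, MvPolynomial.eval, MvPolynomial.eval₂Hom_bind₁]
    simp [mul_div_right_comm]
  have hPR : P = R := eq_of_eval_eq_of_eval_ne_zero hD fun v hv => by
    rw [hR, ← hP, hratio' k v (hdef v hv), hratio k _ ((hdef v hv).moebius hζ),
      Hratio_moebius hζ]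
  rw [hP, hPR, hR]

end
end

section
/- Let ω = e^{iπ/3} and let k ≥ 0 be an integer. Then, for all nonzero complex z₁,…,z_{2k+1}, z at which the defining determinant ratios are defined: (i) s_{Y_{4k+2}}(z₁,…,z_{2k}, z₁^{−1},…,z_{2k}^{−1}, z, 1) = z^k · ∏_{i=1}^{2k}(1 + z_i + z_i^{−1}) · χ_{Y_{2k+2}}(z₁,…,z_{2k}, z, ω) · χ_{Y_{2k}}(z₁,…,z_{2k}); and (ii) s_{Y_{4k+4}}(z₁,…,z_{2k+1}, z₁^{−1},…,z_{2k+1}^{−1}, z, 1) = z^k (1+z) · ∏_{i=1}^{2k+1}(1 + z_i + z_i^{−1}) · χ_{Y_{2k+2}}(z₁,…,z_{2k+1}, z) · χ_{Y_{2k+2}}(z₁,…,z_{2k+1}, ω). -/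
noncomputable section

open Complex
open scoped BigOperators

/-- the double-staircase partition `Y_k` -/
def YkP (k : ℕ) : Fin k → ℕ := fun i => (k - 1 - (i:ℕ)) / 2

/-- numerator of the Schur function -/
def schurNum {m : ℕ} (lam : Fin m → ℕ) (z : Fin m → ℂ) : ℂ :=
  Matrix.det (Matrix.of fun i j : Fin m => z i ^ ((lam j : ℤ) + (m:ℤ) - 1 - ((j:ℕ):ℤ)))

/-- denominator of the Schur function -/
def schurDen {m : ℕ} (z : Fin m → ℂ) : ℂ :=
  Matrix.det (Matrix.of fun i j : Fin m => z i ^ ((m:ℤ) - 1 - ((j:ℕ):ℤ)))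

/-- the Schur function `s_λ(z₁,…,z_m)` -/
def schurF {m : ℕ} (lam : Fin m → ℕ) (z : Fin m → ℂ) : ℂ := schurNum lam z / schurDen z

/-- numerator of the symplectic character -/
def symplNum {m : ℕ} (lam : Fin m → ℕ) (z : Fin m → ℂ) : ℂ :=
  Matrix.det (Matrix.of fun i j : Fin m =>
    z i ^ ((lam j : ℤ) + (m:ℤ) - ((j:ℕ):ℤ)) - z i ^ (-((lam j : ℤ) + (m:ℤ) - ((j:ℕ):ℤ))))

/-- denominator of the symplectic character -/
def symplDen {m : ℕ} (z : Fin m → ℂ) : ℂ :=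
  Matrix.det (Matrix.of fun i j : Fin m =>
    z i ^ ((m:ℤ) - ((j:ℕ):ℤ)) - z i ^ (-((m:ℤ) - ((j:ℕ):ℤ))))

/-- the symplectic character `χ_λ(z₁,…,z_m)` -/
def symplF {m : ℕ} (lam : Fin m → ℕ) (z : Fin m → ℂ) : ℂ := symplNum lam z / symplDen z

/-- the tuple `(z₁,…,z_m, z₁⁻¹,…,z_m⁻¹, a, b)` -/
def dblInv {m n : ℕ} (z : Fin m → ℂ) (a b : ℂ) : Fin n → ℂ := fun j =>
  if h : (j:ℕ) < m then z ⟨j, h⟩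
  else if h2 : (j:ℕ) < m + m then (z ⟨(j:ℕ) - m, by omega⟩)⁻¹
  else if (j:ℕ) = m + m then a else b

/-- The alternant `det (φ_j(v_i))` of a sequence of functions. -/
def alternant (φ : ℕ → ℂ → ℂ) {n : ℕ} (v : Fin n → ℂ) : ℂ :=
  Matrix.det (Matrix.of fun i j : Fin n => φ j (v i))

lemma alternant_eq_prod_mul {n : ℕ} {φ ψ : ℕ → ℂ → ℂ} {v : Fin n → ℂ} (w : Fin n → ℂ)
    (h : ∀ i, ∀ j < n, φ j (v i) = w i * ψ j (v i)) :
    alternant φ v = (∏ i, w i) * alternant ψ v := by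
  unfold alternant
  rw [← Matrix.det_mul_column]
  congr 1
  ext i j
  exact h i j j.2

/-- Adding to each column a multiple of a preceding column preserves the determinant. -/
lemma det_of_add_smul_preceding_column {n : ℕ} (B : Matrix (Fin n) (Fin n) ℂ) (c : Fin n → ℂ)
    (p : Fin n → Fin n) (hp : ∀ j, c j ≠ 0 → p j < j) :
    (Matrix.of fun i j => B i j + c j * B i (p j)).det = B.det := by
  set U : Matrix (Fin n) (Fin n) ℂ :=
    1 + Matrix.of fun l j => if l = p j then c j else 0 with hU
  have hBU : (Matrix.of fun i j => B i j + c j * B i (p j)) = B * U := by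
    ext i j
    rw [hU, mul_add, mul_one]
    simp [Matrix.mul_apply, mul_comm]
  have hdiag : ∀ j, (if j = p j then c j else 0) = 0 := by
    intro j
    split_ifs with h
    · by_contra hc
      exact absurd (hp j hc) (by rw [← h]; exact lt_irrefl j)
    · rfl
  have htri : U.BlockTriangular id := by
    intro l j hlj
    simp only [id] at hlj
    have hne : l ≠ j := ne_of_gt hlj
    simp only [hU, Matrix.add_apply, Matrix.one_apply, hne, if_false, Matrix.of_apply, zero_add]
    split_ifs with h
    · by_contra hc
      exact absurd (hp j hc) (by rw [← h]; exact not_lt.2 hlj.le)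
    · rfl
  rw [hBU, Matrix.det_mul, Matrix.det_of_isUpperTriangular htri]
  simp [hU, hdiag]

lemma alternant_snoc_of_reduction {m : ℕ} {φ ψ : ℕ → ℂ → ℂ} {z : Fin m → ℂ} {y : ℂ}
    (c : ℕ → ℂ) (w : Fin m → ℂ)
    (hz : ∀ i j, φ (j + 1) (z i) - c j * φ (j - 1) (z i) = w i * ψ j (z i))
    (hy : ∀ j, φ (j + 1) y = c j * φ (j - 1) y) :
    alternant φ (Fin.snoc z y : Fin (m + 1) → ℂ)
      = (-1) ^ m * φ 0 y * (∏ i, w i) * alternant ψ z := by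
  set B : Matrix (Fin (m + 1)) (Fin (m + 1)) ℂ :=
    Matrix.of fun i j => φ j ((Fin.snoc z y : Fin (m + 1) → ℂ) i) with hB
  set d : Fin (m + 1) → ℂ := fun j => if (j : ℕ) = 0 then 0 else -c (j - 1) with hd
  set p : Fin (m + 1) → Fin (m + 1) := fun j => ⟨(j : ℕ) - 2, by omega⟩ with hp
  have hcol := det_of_add_smul_preceding_column B d p (by
    intro j hj
    have : (j : ℕ) ≠ 0 := by
      intro h
      exact hj (if_pos h)
    rw [Fin.lt_def]
    simp only [hp]
    omega)
  have hlast : ∀ j : Fin m, B (Fin.last m) j.succ + d j.succ * B (Fin.last m) (p j.succ) = 0 := by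
    intro j
    have := hy j
    simp [hB, hd, hp, this]
  have hrow : ∀ i j : Fin m, B i.castSucc j.succ + d j.succ * B i.castSucc (p j.succ)
      = w i * ψ j (z i) := by
    intro i j
    rw [← hz i j]
    simp [hB, hd, hp]
    ring
  change B.det = _
  rw [← hcol, Matrix.det_succ_row _ (Fin.last m), Fin.sum_univ_succ]
  have hsum : (∑ j : Fin m, (-1 : ℂ) ^ ((Fin.last m : ℕ) + (j.succ : ℕ))
      * (Matrix.of fun i j => B i j + d j * B i (p j)) (Fin.last m) j.succ
      * ((Matrix.of fun i j => B i j + d j * B i (p j)).submatrix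
          (Fin.last m).succAbove j.succ.succAbove).det) = 0 := by
    refine Finset.sum_eq_zero fun j _ => ?_
    rw [Matrix.of_apply, hlast]
    ring
  have hminor : ((Matrix.of fun i j => B i j + d j * B i (p j)).submatrix
      (Fin.last m).succAbove (0 : Fin (m + 1)).succAbove).det
      = (∏ i, w i) * alternant ψ z := by
    unfold alternant
    rw [← Matrix.det_mul_column]
    congr 1
    ext i j
    simp only [Matrix.submatrix_apply, Matrix.of_apply, Fin.succAbove_last, Fin.succAbove_zero]
    exact hrow i j
  rw [hsum, hminor]
  simp [hB, hd]
  ring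

open Polynomial in
/-- The monic polynomials with `p₀ = 1`, `p₁ = X - δ` and `p_{j+2} = X p_{j+1} - p_j`. -/
def chebSeq (δ : ℂ) : ℕ → ℂ[X]
  | 0 => 1
  | 1 => X - C δ
  | j + 2 => X * chebSeq δ (j + 1) - chebSeq δ j

open Polynomial in
lemma chebSeq_monic_natDegree (δ : ℂ) (j : ℕ) :
    (chebSeq δ j).Monic ∧ (chebSeq δ j).natDegree = j := by
  induction j using Nat.strong_induction_on with
  | _ j ih =>
    match j with
    | 0 => simp [chebSeq]
    | 1 => exact ⟨monic_X_sub_C δ, natDegree_X_sub_C δ⟩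
    | j + 2 =>
      obtain ⟨hm1, hd1⟩ := ih (j + 1) (by omega)
      obtain ⟨hm0, hd0⟩ := ih j (by omega)
      have hm : (X * chebSeq δ (j + 1)).Monic := monic_X.mul hm1
      have hd : (X * chebSeq δ (j + 1)).natDegree = j + 2 := by
        rw [monic_X.natDegree_mul hm1, natDegree_X, hd1]
        ring
      have hlt : (chebSeq δ j).degree < (X * chebSeq δ (j + 1)).degree := by
        rw [degree_eq_natDegree hm0.ne_zero, degree_eq_natDegree hm.ne_zero, hd0, hd]
        exact_mod_cast (by omega : j < j + 2)
      refine ⟨hm.sub_of_left hlt, ?_⟩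
      rw [chebSeq, natDegree_eq_of_degree_eq (degree_sub_eq_left_of_degree_lt hlt), hd]

lemma alternant_of_recurrence {n : ℕ} {φ : ℕ → ℂ → ℂ} {v : Fin n → ℂ} (δ : ℂ)
    (h1 : ∀ i, φ 1 (v i) = (v i + (v i)⁻¹ - δ) * φ 0 (v i))
    (h2 : ∀ i j, φ (j + 2) (v i) = (v i + (v i)⁻¹) * φ (j + 1) (v i) - φ j (v i)) :
    alternant φ v
      = (∏ i, φ 0 (v i)) * (Matrix.vandermonde fun i => v i + (v i)⁻¹).det := by
  have key : ∀ i j, φ j (v i) = φ 0 (v i) * (chebSeq δ j).eval (v i + (v i)⁻¹) := by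
    intro i j
    induction j using Nat.strong_induction_on with
    | _ j ih =>
      match j with
      | 0 => simp [chebSeq]
      | 1 => simp [chebSeq, h1]; ring
      | j + 2 =>
        rw [h2, ih (j + 1) (by omega), ih j (by omega)]
        simp only [chebSeq, Polynomial.eval_sub, Polynomial.eval_mul, Polynomial.eval_X]
        ring
  rw [Matrix.det_eval_matrixOfPolynomials_eq_det_vandermonde _ (fun j => chebSeq δ j)
    (fun j => (chebSeq_monic_natDegree δ j).2) (fun j => (chebSeq_monic_natDegree δ j).1),
    ← Matrix.det_mul_column]
  unfold alternant
  congr 1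
  ext i j
  exact key i j

lemma det_vandermonde_snoc {m : ℕ} (c : Fin m → ℂ) (a : ℂ) :
    (Matrix.vandermonde (Fin.snoc c a : Fin (m + 1) → ℂ)).det
      = (Matrix.vandermonde c).det * ∏ i, (a - c i) := by
  rw [Matrix.det_vandermonde, Matrix.det_vandermonde, Fin.prod_univ_castSucc,
    ← Finset.prod_mul_distrib]
  have : Finset.Ioi (Fin.last m) = ∅ := by
    ext j; simp [Fin.le_last]
  rw [this, Finset.prod_empty, mul_one]
  refine Finset.prod_congr rfl fun i _ => ?_
  have : Finset.Ioi i.castSucc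
      = insert (Fin.last m) ((Finset.Ioi i).map Fin.castSuccEmb) := by
    ext j
    refine Fin.lastCases ?_ (fun j => ?_) j
    · simp [Fin.castSucc_lt_last]
    · simpa using fun _ => Fin.le_last j.castSucc
  rw [this, Finset.prod_insert (by simp), Finset.prod_map, mul_comm]
  simp only [Fin.coe_castSuccEmb, Fin.snoc_castSucc, Fin.snoc_last]

/-- The block matrix `[1 1; 1 -1]`. -/
def sumDiffBlocks (M : ℕ) : Matrix (Fin M ⊕ Fin M) (Fin M ⊕ Fin M) ℂ :=
  Matrix.fromBlocks 1 1 1 (-1)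

/-- The determinant of `[u v; t v, t u; a b; 1 1]` factors after symmetrisation. -/
lemma det_fromBlocks_symmetrised {m : ℕ} (u v : Fin m → Fin (m + 1) → ℂ) (a b : Fin (m + 1) → ℂ)
    (t : Fin m → ℂ) (ht : ∀ i, t i ≠ 0) :
    (sumDiffBlocks (m + 1)).det
      * (Matrix.fromBlocks
          (Matrix.of (Fin.snoc u (fun _ => 1) : Fin (m + 1) → Fin (m + 1) → ℂ))
          (Matrix.of (Fin.snoc v (fun _ => 1) : Fin (m + 1) → Fin (m + 1) → ℂ))
          (Matrix.of (Fin.snoc (fun i j => t i * v i j) a : Fin (m + 1) → Fin (m + 1) → ℂ))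
          (Matrix.of (Fin.snoc (fun i j => t i * u i j) b : Fin (m + 1) → Fin (m + 1) → ℂ))).det
      = (-2) ^ m * (∏ i, t i)
        * (Matrix.of (Fin.snoc (fun i j => u i j + v i j) (fun _ => 2) :
            Fin (m + 1) → Fin (m + 1) → ℂ)).det
        * (Matrix.of (Fin.snoc (fun i j => u i j - v i j) (fun j => a j - b j) :
            Fin (m + 1) → Fin (m + 1) → ℂ)).det := by
  set A := Matrix.of (Fin.snoc u (fun _ => 1) : Fin (m + 1) → Fin (m + 1) → ℂ) with hA
  set B := Matrix.of (Fin.snoc v (fun _ => 1) : Fin (m + 1) → Fin (m + 1) → ℂ) with hB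
  set C := Matrix.of
    (Fin.snoc (fun i j => t i * v i j) a : Fin (m + 1) → Fin (m + 1) → ℂ) with hC
  set D := Matrix.of
    (Fin.snoc (fun i j => t i * u i j) b : Fin (m + 1) → Fin (m + 1) → ℂ) with hD
  set d : Fin (m + 1) → ℂ := Fin.snoc (fun i => (t i)⁻¹) 0 with hd
  have hzero : (A - B) + Matrix.diagonal d * (C - D) = 0 := by
    ext i j
    refine Fin.lastCases ?_ (fun i => ?_) i
    · simp [hA, hB, hd]
    · have := ht i
      simp [hA, hB, hC, hD, hd]
      field_simp
      ring
  have hprod : Matrix.fromBlocks 1 (Matrix.diagonal d) 0 1 * Matrix.fromBlocks A B C D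
      * sumDiffBlocks (m + 1)
      = Matrix.fromBlocks ((A + B) + Matrix.diagonal d * (C + D)) 0 (C + D) (C - D) := by
    have hupper : A + Matrix.diagonal d * C - (B + Matrix.diagonal d * D) = 0 := by
      rw [← hzero, Matrix.mul_sub]
      abel
    rw [sumDiffBlocks, Matrix.fromBlocks_multiply, Matrix.fromBlocks_multiply]
    simp only [Matrix.one_mul, Matrix.mul_one, Matrix.zero_mul, Matrix.mul_neg, zero_add,
      ← sub_eq_add_neg, hupper, Matrix.mul_add]
    congr 1
    abel
  have hX : (A + B) + Matrix.diagonal d * (C + D)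
      = Matrix.of fun i j => (Fin.snoc (fun _ => 2) 1 : Fin (m + 1) → ℂ) i
        * (Matrix.of (Fin.snoc (fun i j => u i j + v i j) (fun _ => 2) :
            Fin (m + 1) → Fin (m + 1) → ℂ)) i j := by
    ext i j
    refine Fin.lastCases ?_ (fun i => ?_) i
    · simp [hA, hB, hd]
      norm_num
    · have := ht i
      simp [hA, hB, hC, hD, hd]
      field_simp
      ring
  have hZ : C - D = Matrix.of fun i j => (Fin.snoc (fun i => -t i) 1 : Fin (m + 1) → ℂ) i
        * (Matrix.of (Fin.snoc (fun i j => u i j - v i j) (fun j => a j - b j) :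
            Fin (m + 1) → Fin (m + 1) → ℂ)) i j := by
    ext i j
    refine Fin.lastCases ?_ (fun i => ?_) i
    · simp [hC, hD]
    · simp [hC, hD]
      ring
  have hdet := congrArg Matrix.det hprod
  rw [Matrix.det_mul, Matrix.det_mul, Matrix.det_fromBlocks_zero₂₁, Matrix.det_one, one_mul,
    one_mul, Matrix.det_fromBlocks_zero₁₂, hX, hZ, Matrix.det_mul_column,
    Matrix.det_mul_column] at hdet
  rw [mul_comm, hdet]
  simp only [Fin.prod_univ_castSucc, Fin.snoc_castSucc, Fin.snoc_last, Finset.prod_const,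
    Finset.card_univ, Fintype.card_fin, mul_one, Finset.prod_neg]
  rw [neg_pow (2 : ℂ) m]
  ring

lemma det_sumDiffBlocks_ne_zero (M : ℕ) :
    (sumDiffBlocks M).det ≠ 0 := by
  have h : sumDiffBlocks M * sumDiffBlocks M = (2 : ℂ) • 1 := by
    rw [sumDiffBlocks, Matrix.fromBlocks_multiply, ← Matrix.fromBlocks_one, Matrix.fromBlocks_smul]
    congr 1 <;> simp [two_smul, one_add_one_eq_two]
  intro h0
  have := congrArg Matrix.det h
  rw [Matrix.det_mul, h0, zero_mul, Matrix.det_smul, Matrix.det_one, mul_one] at this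
  exact pow_ne_zero _ two_ne_zero this.symm

lemma exists_det_submatrix_equiv {α β : Type*} [Fintype α] [DecidableEq α] [Fintype β]
    [DecidableEq β] (e f : α ≃ β) :
    ∃ K : ℂ, K ≠ 0 ∧ ∀ A : Matrix β β ℂ, (A.submatrix e f).det = K * A.det := by
  refine ⟨(Equiv.Perm.sign (f.trans e.symm) : ℤ), ?_, fun A => ?_⟩
  · exact_mod_cast (Equiv.Perm.sign (f.trans e.symm)).ne_zero
  · have : A.submatrix e f = (A.submatrix e e).submatrix id (f.trans e.symm) := by
      ext i j
      simp
    rw [this, Matrix.det_permute', Matrix.det_submatrix_equiv_self]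

/-- For exponents `a` with `a_l + a_{2m+1-l} = s`, the determinant `det (x_i ^ a_l)` at
`x = (z₁,…,z_m,z₁⁻¹,…,z_m⁻¹,zz,1)` is, up to a constant that depends on `m` only, a product of
two determinants of half the size. -/
lemma exists_alternant_dblInv_eq {m n : ℕ} (hn : n = 2 * (m + 1)) :
    ∃ K : ℂ, K ≠ 0 ∧ ∀ (a : ℕ → ℤ) (s : ℤ) (_ : ∀ j < m + 1, a (m + 1 + j) + a (m - j) = s)
      (z : Fin m → ℂ) (zz : ℂ) (_ : ∀ i, z i ≠ 0),
      K * alternant (fun l x => x ^ a l) (dblInv z zz 1 : Fin n → ℂ)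
        = (∏ i, z i ^ (-s))
          * alternant (fun j x => x ^ a (m + 1 + j) + x ^ a (m - j))
              (Fin.snoc z 1 : Fin (m + 1) → ℂ)
          * alternant (fun j x => x ^ a (m + 1 + j) - x ^ a (m - j))
              (Fin.snoc z zz : Fin (m + 1) → ℂ) := by
  have hcard : Fintype.card (Fin (m + 1) ⊕ Fin (m + 1)) = Fintype.card (Fin n) := by
    simp [hn]; ring
  let row : Fin (m + 1) ⊕ Fin (m + 1) → Fin n := Sum.elim
    (fun i => ⟨if (i : ℕ) < m then i else 2 * m + 1, by split_ifs <;> omega⟩)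
    (fun i => ⟨m + i, by omega⟩)
  let col : Fin (m + 1) ⊕ Fin (m + 1) → Fin n := Sum.elim
    (fun j => ⟨m + 1 + j, by omega⟩) (fun j => ⟨m - j, by omega⟩)
  have hrow : Function.Bijective row := by
    refine (Fintype.bijective_iff_injective_and_card _).2 ⟨?_, hcard⟩
    rintro (i | i) (j | j) h <;> simp only [row, Sum.elim_inl, Sum.elim_inr, Fin.mk.injEq] at h
    · congr 1; ext; split_ifs at h <;> omega
    · exfalso; split_ifs at h <;> omega
    · exfalso; split_ifs at h <;> omega
    · congr 1; ext; omega
  have hcol : Function.Bijective col := by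
    refine (Fintype.bijective_iff_injective_and_card _).2 ⟨?_, hcard⟩
    rintro (i | i) (j | j) h <;> simp only [col, Sum.elim_inl, Sum.elim_inr, Fin.mk.injEq] at h
    · congr 1; ext; omega
    · exfalso; omega
    · exfalso; omega
    · congr 1; ext; omega
  obtain ⟨K, hK, hsub⟩ :=
    exists_det_submatrix_equiv (Equiv.ofBijective row hrow) (Equiv.ofBijective col hcol)
  refine ⟨((-2) ^ m)⁻¹ * (sumDiffBlocks (m + 1)).det * K, mul_ne_zero (mul_ne_zero (by simp)
      (det_sumDiffBlocks_ne_zero _)) hK, ?_⟩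
  intro a s hs z zz hz
  have hblocks := det_fromBlocks_symmetrised (fun i j => z i ^ a (m + 1 + j))
    (fun i j => z i ^ a (m - j)) (fun j => zz ^ a (m + 1 + j)) (fun j => zz ^ a (m - j))
    (fun i => z i ^ (-s)) (fun i => zpow_ne_zero _ (hz i))
  have hmat : (Matrix.of fun i l : Fin n => (dblInv z zz 1 : Fin n → ℂ) i ^ a l).submatrix row col
      = Matrix.fromBlocks
          (Matrix.of (Fin.snoc (fun i j => z i ^ a (m + 1 + j)) (fun _ => 1) :
            Fin (m + 1) → Fin (m + 1) → ℂ))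
          (Matrix.of (Fin.snoc (fun i j => z i ^ a (m - j)) (fun _ => 1) :
            Fin (m + 1) → Fin (m + 1) → ℂ))
          (Matrix.of (Fin.snoc (fun i j => z i ^ (-s) * z i ^ a (m - j))
            (fun j => zz ^ a (m + 1 + j)) : Fin (m + 1) → Fin (m + 1) → ℂ))
          (Matrix.of (Fin.snoc (fun i j => z i ^ (-s) * z i ^ a (m + 1 + j))
            (fun j => zz ^ a (m - j)) : Fin (m + 1) → Fin (m + 1) → ℂ)) := by
    have hinv : ∀ (i : Fin m) (e e' : ℤ), e + e' = s → (z i)⁻¹ ^ e = z i ^ (-s) * z i ^ e' := by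
      intro i e e' h
      rw [inv_zpow', ← zpow_add₀ (hz i)]
      congr 1
      omega
    have hrow_z : ∀ i : Fin m, (dblInv z zz 1 : Fin n → ℂ) (row (Sum.inl i.castSucc)) = z i := by
      intro i
      simp [row, dblInv]
    have hrow_inv : ∀ i : Fin m,
        (dblInv z zz 1 : Fin n → ℂ) (row (Sum.inr i.castSucc)) = (z i)⁻¹ := by
      intro i
      simp [row, dblInv]
    have hrow_zz : (dblInv z zz 1 : Fin n → ℂ) (row (Sum.inr (Fin.last m))) = zz := by
      simp [row, dblInv]
    have hrow_one : (dblInv z zz 1 : Fin n → ℂ) (row (Sum.inl (Fin.last m))) = 1 := by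
      simp only [row, dblInv, Sum.elim_inl, Fin.val_last, lt_irrefl, if_false]
      rw [dif_neg (by omega), dif_neg (by omega), if_neg (by omega)]
    ext (i | i) (j | j) <;> refine Fin.lastCases ?_ (fun i => ?_) i <;>
      simp only [Matrix.submatrix_apply, Matrix.of_apply, Matrix.fromBlocks_apply₁₁,
        Matrix.fromBlocks_apply₁₂, Matrix.fromBlocks_apply₂₁, Matrix.fromBlocks_apply₂₂,
        hrow_z, hrow_inv, hrow_zz, hrow_one, Fin.snoc_last, Fin.snoc_castSucc, one_zpow] <;>
      simp only [col, Sum.elim_inl, Sum.elim_inr]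
    · exact hinv i _ _ (hs j j.2)
    · exact hinv i _ _ (by rw [add_comm]; exact hs j j.2)
  have hf : (Matrix.of (Fin.snoc (fun i j => z i ^ a (m + 1 + j) + z i ^ a (m - j)) (fun _ => 2) :
      Fin (m + 1) → Fin (m + 1) → ℂ)).det
      = alternant (fun j x => x ^ a (m + 1 + j) + x ^ a (m - j))
          (Fin.snoc z 1 : Fin (m + 1) → ℂ) := by
    unfold alternant
    congr 1
    ext i j
    refine Fin.lastCases ?_ (fun i => ?_) i
    · simp [one_add_one_eq_two]
    · simp
  have hg : (Matrix.of (Fin.snoc (fun i j => z i ^ a (m + 1 + j) - z i ^ a (m - j))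
      (fun j => zz ^ a (m + 1 + j) - zz ^ a (m - j)) : Fin (m + 1) → Fin (m + 1) → ℂ)).det
      = alternant (fun j x => x ^ a (m + 1 + j) - x ^ a (m - j))
          (Fin.snoc z zz : Fin (m + 1) → ℂ) := by
    unfold alternant
    congr 1
    ext i j
    refine Fin.lastCases ?_ (fun i => ?_) i <;> simp
  rw [hf, hg, ← hmat] at hblocks
  have hKdet := hsub (Matrix.of fun i l : Fin n => (dblInv z zz 1 : Fin n → ℂ) i ^ a l)
  simp only [Equiv.ofBijective, Equiv.coe_fn_mk] at hKdet
  rw [hKdet] at hblocks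
  unfold alternant at hblocks ⊢
  have h2 : ((-2 : ℂ) ^ m) ≠ 0 := by simp
  calc _ = ((-2 : ℂ) ^ m)⁻¹ * ((sumDiffBlocks (m + 1)).det * (K * (Matrix.of fun i l : Fin n =>
            (dblInv z zz 1 : Fin n → ℂ) i ^ a l).det)) := by ring
    _ = _ := by
      rw [hblocks]
      field_simp

lemma prod_snoc {m : ℕ} (f : ℂ → ℂ) (z : Fin m → ℂ) (y : ℂ) :
    ∏ i, f ((Fin.snoc z y : Fin (m + 1) → ℂ) i) = (∏ i, f (z i)) * f y := by
  simp [Fin.prod_univ_castSucc]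

lemma forall_snoc {m : ℕ} {p : ℂ → Prop} {z : Fin m → ℂ} {y : ℂ} (hz : ∀ i, p (z i)) (hy : p y) :
    ∀ i, p ((Fin.snoc z y : Fin (m + 1) → ℂ) i) := by
  intro i
  refine Fin.lastCases ?_ (fun i => ?_) i
  · simpa using hy
  · simpa using hz i

/-- The Vandermonde determinant in the variables `x_i + x_i⁻¹`. -/
def symVandermonde {n : ℕ} (v : Fin n → ℂ) : ℂ :=
  (Matrix.vandermonde fun i => v i + (v i)⁻¹).det

lemma symVandermonde_snoc {m : ℕ} (z : Fin m → ℂ) (y : ℂ) :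
    symVandermonde (Fin.snoc z y : Fin (m + 1) → ℂ)
      = symVandermonde z * ∏ i, (y + y⁻¹ - (z i + (z i)⁻¹)) := by
  unfold symVandermonde
  rw [← det_vandermonde_snoc]
  congr 2
  ext i
  refine Fin.lastCases ?_ (fun i => ?_) i <;> simp

/-- The exponents `1, 2, 4, 5, 7, 8, …` of the double-staircase symplectic characters. -/
def dsExp (l : ℕ) : ℤ := l + (l / 2 : ℕ) + 1

lemma dsExp_add_two (l : ℕ) : dsExp (l + 2) = dsExp l + 3 := by
  simp only [dsExp]
  omega

lemma dsExp_zero : dsExp 0 = 1 := rfl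

lemma dsExp_one : dsExp 1 = 2 := rfl

def dsOdd (l : ℕ) (x : ℂ) : ℂ := x ^ dsExp l - x ^ (-dsExp l)

def dsEven (l : ℕ) (x : ℂ) : ℂ := x ^ dsExp l + x ^ (-dsExp l)

def dsMid (l : ℕ) (x : ℂ) : ℂ := x ^ (dsExp (l + 1) - 3) - x ^ (-dsExp (l + 1))

def dsHalfEven (l : ℕ) (x : ℂ) : ℂ := x ^ (dsExp (l + 1) - 1) + x ^ (2 - dsExp (l + 1))

def dsHalfOdd (l : ℕ) (x : ℂ) : ℂ := x ^ (dsExp (l + 1) - 1) - x ^ (2 - dsExp (l + 1))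

lemma ne_zero_of_sq_eq_sub_one {ω : ℂ} (hω : ω ^ 2 = ω - 1) : ω ≠ 0 := by
  rintro rfl
  norm_num at hω

lemma alternant_dsOdd_snoc {m : ℕ} {z : Fin m → ℂ} (hz : ∀ i, z i ≠ 0) {ω : ℂ}
    (hω : ω ^ 2 = ω - 1) :
    alternant dsOdd (Fin.snoc z ω : Fin (m + 1) → ℂ)
      = (-1) ^ m * (ω - ω⁻¹) * (∏ i, (z i ^ 3 + 1)) * alternant dsMid z := by
  have hω0 := ne_zero_of_sq_eq_sub_one hω
  have hω3 : ω ^ 3 = -1 := by linear_combination (ω + 1) * hω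
  have h0 : dsOdd 0 ω = ω - ω⁻¹ := by simp [dsOdd, dsExp_zero]
  rw [← h0]
  refine alternant_snoc_of_reduction (fun j => if j = 0 then 1 else -1) _ ?_ ?_
  · rintro i (_ | j)
    · have := hz i
      simp only [dsOdd, dsMid, zero_add, dsExp_zero, dsExp_one, if_true, Nat.zero_sub]
      norm_num [zpow_neg, zpow_ofNat]
      field_simp
      ring
    · have := hz i
      simp only [dsOdd, dsMid, Nat.add_sub_cancel, Nat.add_one_ne_zero, if_false, dsExp_add_two,
        add_assoc, one_add_one_eq_two, add_sub_cancel_right]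
      rw [neg_add, zpow_add₀ this, zpow_add₀ this, zpow_neg, zpow_neg]
      norm_num [zpow_ofNat]
      field_simp
      ring
  · rintro (_ | j)
    · simp only [dsOdd, zero_add, dsExp_zero, dsExp_one, if_true, Nat.zero_sub]
      norm_num [zpow_neg, zpow_ofNat]
      field_simp
      linear_combination (ω ^ 2 - 1) * hω
    · simp only [dsOdd, Nat.add_sub_cancel, Nat.add_one_ne_zero, if_false, dsExp_add_two,
        add_assoc, one_add_one_eq_two]
      rw [neg_add, zpow_add₀ hω0, zpow_add₀ hω0, zpow_neg ω 3, zpow_ofNat, hω3]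
      norm_num
      ring

lemma alternant_dsEven_snoc_one {m : ℕ} {z : Fin m → ℂ} (hz : ∀ i, z i ≠ 0) :
    alternant dsEven (Fin.snoc z 1 : Fin (m + 1) → ℂ)
      = (-1) ^ m * 2 * (∏ i, (z i ^ 3 - 1)) * alternant dsMid z := by
  have h0 : dsEven 0 1 = 2 := by norm_num [dsEven]
  rw [← h0]
  refine alternant_snoc_of_reduction (fun _ => 1) _ ?_ ?_
  · rintro i (_ | j)
    · have := hz i
      simp only [dsEven, dsMid, zero_add, dsExp_zero, dsExp_one, Nat.zero_sub]
      norm_num [zpow_neg, zpow_ofNat]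
      field_simp
      ring
    · have := hz i
      simp only [dsEven, dsMid, Nat.add_sub_cancel, dsExp_add_two,
        add_assoc, one_add_one_eq_two, add_sub_cancel_right]
      rw [neg_add, zpow_add₀ this, zpow_add₀ this, zpow_neg, zpow_neg]
      norm_num [zpow_ofNat]
      field_simp
      ring
  · intro j
    simp [dsEven]

lemma alternant_dsHalfEven_snoc_one {m : ℕ} {z : Fin m → ℂ} (hz : ∀ i, z i ≠ 0) :
    alternant dsHalfEven (Fin.snoc z 1 : Fin (m + 1) → ℂ)
      = (-1) ^ m * 2 * (∏ i, ((z i ^ 3 - 1) * (z i)⁻¹)) * alternant dsOdd z := by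
  have h0 : dsHalfEven 0 1 = 2 := by norm_num [dsHalfEven]
  rw [← h0]
  refine alternant_snoc_of_reduction (fun _ => 1) _ ?_ ?_
  · rintro i (_ | j)
    · have := hz i
      simp only [dsHalfEven, dsOdd, zero_add, dsExp_zero, dsExp_one, Nat.zero_sub,
        show dsExp (1 + 1) = 4 from rfl]
      norm_num [zpow_neg, zpow_ofNat]
      field_simp
      ring
    · have := hz i
      simp only [dsHalfEven, dsOdd, Nat.add_sub_cancel,
        show dsExp (j + 1 + 1 + 1) = dsExp (j + 1) + 3 from dsExp_add_two (j + 1)]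
      generalize dsExp (j + 1) = e
      rw [show e + 3 - 1 = e + 2 by ring, show 2 - (e + 3) = -e - 1 by ring,
        show 2 - e = -e + 2 by ring, zpow_sub₀ this, zpow_sub₀ this, zpow_add₀ this,
        zpow_add₀ this, zpow_neg]
      norm_num [zpow_ofNat]
      field_simp
      ring
  · intro j
    simp [dsHalfEven]

lemma alternant_dsHalfOdd {n : ℕ} {v : Fin n → ℂ} (hv : ∀ i, v i ≠ 0) :
    alternant dsHalfOdd v = (∏ i, v i ^ 2) * alternant dsMid v := by
  refine alternant_eq_prod_mul _ fun i j _ => ?_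
  have := hv i
  simp only [dsHalfOdd, dsMid]
  generalize dsExp (j + 1) = e
  rw [show e - 1 = e - 3 + 2 by ring, show 2 - e = -e + 2 by ring, zpow_add₀ this, zpow_add₀ this]
  norm_num [zpow_ofNat]
  ring

lemma alternant_sympl_denominator {n : ℕ} {v : Fin n → ℂ} (hv : ∀ i, v i ≠ 0) :
    alternant (fun l x => x ^ ((l : ℤ) + 1) - x ^ (-((l : ℤ) + 1))) v
      = (∏ i, (v i - (v i)⁻¹)) * symVandermonde v := by
  rw [alternant_of_recurrence 0, symVandermonde]
  · simp
  · intro i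
    have := hv i
    norm_num [zpow_neg, zpow_ofNat]
    field_simp
    ring
  · intro i j
    have := hv i
    push_cast
    simp only [neg_add, zpow_add₀ this, zpow_neg, zpow_natCast, zpow_ofNat]
    field_simp
    ring

lemma alternant_half_even {n : ℕ} {v : Fin n → ℂ} (hv : ∀ i, v i ≠ 0) :
    alternant (fun l x => x ^ ((l : ℤ) + 1) + x ^ (-(l : ℤ))) v
      = (∏ i, (v i + 1)) * symVandermonde v := by
  rw [alternant_of_recurrence 1, symVandermonde]
  · simp
  · intro i
    have := hv i
    norm_num [zpow_neg, zpow_ofNat]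
    field_simp
    ring
  · intro i j
    have := hv i
    push_cast
    simp only [neg_add, zpow_add₀ this, zpow_neg, zpow_natCast, zpow_ofNat]
    field_simp
    ring

lemma alternant_half_odd {n : ℕ} {v : Fin n → ℂ} (hv : ∀ i, v i ≠ 0) :
    alternant (fun l x => x ^ ((l : ℤ) + 1) - x ^ (-(l : ℤ))) v
      = (∏ i, (v i - 1)) * symVandermonde v := by
  rw [alternant_of_recurrence (-1), symVandermonde]
  · simp
  · intro i
    have := hv i
    norm_num [zpow_neg, zpow_ofNat]
    field_simp
    ring
  · intro i j
    have := hv i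
    push_cast
    simp only [neg_add, zpow_add₀ this, zpow_neg, zpow_natCast, zpow_ofNat]
    field_simp
    ring

lemma exists_det_reversed_eq (n : ℕ) :
    ∃ K : ℂ, K ≠ 0 ∧ ∀ (φ : ℕ → ℂ → ℂ) (v : Fin n → ℂ),
      (Matrix.of fun i j : Fin n => φ (n - 1 - j) (v i)).det = K * alternant φ v := by
  obtain ⟨K, hK, h⟩ := exists_det_submatrix_equiv (Equiv.refl (Fin n)) Fin.revPerm
  refine ⟨K, hK, fun φ v => ?_⟩
  rw [alternant, ← h]
  congr 1
  ext i j
  simp only [Matrix.submatrix_apply, Matrix.of_apply, Equiv.refl_apply, Fin.revPerm_apply,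
    Fin.val_rev]
  congr 1
  omega

lemma schurF_YkP {n : ℕ} {v : Fin n → ℂ} (hv : schurDen v ≠ 0) :
    alternant (fun l x => x ^ (l : ℤ)) v ≠ 0 ∧
      schurF (YkP n) v = alternant (fun l x => x ^ ((l + l / 2 : ℕ) : ℤ)) v
        / alternant (fun l x => x ^ (l : ℤ)) v := by
  obtain ⟨K, hK, h⟩ := exists_det_reversed_eq n
  have hden : schurDen v = K * alternant (fun l x => x ^ (l : ℤ)) v := by
    rw [← h, schurDen]
    congr 1
    ext i j
    simp only [Matrix.of_apply]
    congr 1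
    omega
  have hnum : schurNum (YkP n) v = K * alternant (fun l x => x ^ ((l + l / 2 : ℕ) : ℤ)) v := by
    rw [← h, schurNum]
    congr 1
    ext i j
    simp only [Matrix.of_apply, YkP]
    congr 1
    omega
  rw [hden] at hv
  exact ⟨right_ne_zero_of_mul hv, by rw [schurF, hden, hnum, mul_div_mul_left _ _ hK]⟩

lemma symplF_YkP {n : ℕ} {v : Fin n → ℂ} (hv0 : ∀ i, v i ≠ 0) (hv : symplDen v ≠ 0) :
    (∏ i, (v i - (v i)⁻¹)) * symVandermonde v ≠ 0 ∧
      symplF (YkP n) v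
        = alternant dsOdd v / ((∏ i, (v i - (v i)⁻¹)) * symVandermonde v) := by
  rw [← alternant_sympl_denominator hv0]
  obtain ⟨K, hK, h⟩ := exists_det_reversed_eq n
  have hden : symplDen v
      = K * alternant (fun l x => x ^ ((l : ℤ) + 1) - x ^ (-((l : ℤ) + 1))) v := by
    rw [← h, symplDen]
    congr 1
    ext i j
    simp only [Matrix.of_apply]
    rw [show (n : ℤ) - (j : ℕ) = ((n - 1 - j : ℕ) : ℤ) + 1 by omega]
  have hnum : symplNum (YkP n) v = K * alternant dsOdd v := by
    rw [← h, symplNum]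
    congr 1
    ext i j
    simp only [Matrix.of_apply, YkP, dsOdd]
    rw [show (((n - 1 - j) / 2 : ℕ) : ℤ) + n - (j : ℕ) = dsExp (n - 1 - j) by
      simp only [dsExp]; omega]
  rw [hden] at hv
  exact ⟨right_ne_zero_of_mul hv, by rw [symplF, hden, hnum, mul_div_mul_left _ _ hK]⟩

lemma schurF_YkP_dblInv {m n : ℕ} {s : ℤ} (hn : n = 2 * (m + 1))
    (hs : ∀ j < m + 1,
      ((m + 1 + j + (m + 1 + j) / 2 : ℕ) : ℤ) + ((m - j + (m - j) / 2 : ℕ) : ℤ) = s)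
    {z : Fin m → ℂ} {zz : ℂ} (hz : ∀ i, z i ≠ 0) (hzz : zz ≠ 0)
    (hden : schurDen (dblInv z zz 1 : Fin n → ℂ) ≠ 0) :
    zz ^ m * 2 * (zz - 1) * (∏ i, (z i - (z i)⁻¹)) * symVandermonde z ^ 2
        * (∏ i, (2 - (z i + (z i)⁻¹))) * (∏ i, (zz + zz⁻¹ - (z i + (z i)⁻¹))) ≠ 0 ∧
      schurF (YkP n) (dblInv z zz 1)
        = (∏ i, z i ^ (-s))
          * alternant (fun j x => x ^ ((m + 1 + j + (m + 1 + j) / 2 : ℕ) : ℤ)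
              + x ^ ((m - j + (m - j) / 2 : ℕ) : ℤ)) (Fin.snoc z 1 : Fin (m + 1) → ℂ)
          * alternant (fun j x => x ^ ((m + 1 + j + (m + 1 + j) / 2 : ℕ) : ℤ)
              - x ^ ((m - j + (m - j) / 2 : ℕ) : ℤ)) (Fin.snoc z zz : Fin (m + 1) → ℂ)
          / (zz ^ m * 2 * (zz - 1) * (∏ i, (z i - (z i)⁻¹)) * symVandermonde z ^ 2
            * (∏ i, (2 - (z i + (z i)⁻¹))) * (∏ i, (zz + zz⁻¹ - (z i + (z i)⁻¹)))) := by
  obtain ⟨hne, heq⟩ := schurF_YkP hden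
  obtain ⟨K, hK, h⟩ := exists_alternant_dblInv_eq hn
  have hnum := h (fun l => ((l + l / 2 : ℕ) : ℤ)) s hs z zz hz
  have hdet := h (fun l => (l : ℤ)) (2 * m + 1) (fun j hj => by omega) z zz hz
  have h1 : ∀ i, (Fin.snoc z 1 : Fin (m + 1) → ℂ) i ≠ 0 := forall_snoc (p := (· ≠ 0)) hz one_ne_zero
  have h2 : ∀ i, (Fin.snoc z zz : Fin (m + 1) → ℂ) i ≠ 0 :=
    forall_snoc (p := (· ≠ 0)) hz hzz
  have hexp : ∀ (x : ℂ), x ≠ 0 → ∀ j < m + 1,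
      x ^ ((m + 1 + j : ℕ) : ℤ) = x ^ m * x ^ ((j : ℤ) + 1) ∧
        x ^ ((m - j : ℕ) : ℤ) = x ^ m * x ^ (-(j : ℤ)) := by
    intro x hx j hj
    rw [← zpow_natCast x m, ← zpow_add₀ hx, ← zpow_add₀ hx]
    constructor <;> congr 1 <;> omega
  have hcancel : (∏ i, z i ^ (-(2 * m + 1 : ℤ))) * (∏ i, z i ^ m) * (∏ i, z i ^ m)
      * (∏ i, (z i + 1)) * (∏ i, (z i - 1)) = ∏ i, (z i - (z i)⁻¹) := by
    simp only [← Finset.prod_mul_distrib]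
    refine Finset.prod_congr rfl fun i _ => ?_
    have := hz i
    rw [neg_add, zpow_add₀ this, zpow_neg, two_mul, zpow_add₀ this, zpow_natCast, zpow_neg_one]
    field_simp
    ring
  rw [alternant_eq_prod_mul (fun i => (Fin.snoc z 1 : Fin (m + 1) → ℂ) i ^ m)
      (ψ := fun j x => x ^ ((j : ℤ) + 1) + x ^ (-(j : ℤ)))
      (fun i j hj => by rw [(hexp _ (h1 i) j hj).1, (hexp _ (h1 i) j hj).2, mul_add]),
    alternant_eq_prod_mul (fun i => (Fin.snoc z zz : Fin (m + 1) → ℂ) i ^ m)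
      (v := Fin.snoc z zz) (ψ := fun j x => x ^ ((j : ℤ) + 1) - x ^ (-(j : ℤ)))
      (fun i j hj => by rw [(hexp _ (h2 i) j hj).1, (hexp _ (h2 i) j hj).2, mul_sub]),
    alternant_half_even h1, alternant_half_odd h2, symVandermonde_snoc, symVandermonde_snoc,
    prod_snoc (fun x => x ^ m), prod_snoc (fun x => x ^ m), prod_snoc (fun x => x + 1),
    prod_snoc (fun x => x - 1), inv_one, one_add_one_eq_two, one_pow] at hdet
  have hdet' : K * alternant (fun l x => x ^ (l : ℤ)) (dblInv z zz 1 : Fin n → ℂ)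
      = zz ^ m * 2 * (zz - 1) * (∏ i, (z i - (z i)⁻¹)) * symVandermonde z ^ 2
        * (∏ i, (2 - (z i + (z i)⁻¹))) * (∏ i, (zz + zz⁻¹ - (z i + (z i)⁻¹))) := by
    rw [hdet, ← hcancel]
    ring
  rw [← hdet']
  exact ⟨mul_ne_zero hK hne, by rw [heq, ← hnum, mul_div_mul_left _ _ hK]⟩

lemma prod_cube_sub_one_mul {m : ℕ} {z : Fin m → ℂ} (hz : ∀ i, z i ≠ 0) :
    (∏ i, (z i ^ 3 - 1)) * (∏ i, (z i - (z i)⁻¹)) * (∏ i, (1 - (z i + (z i)⁻¹)))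
      = (∏ i, (1 + z i + (z i)⁻¹)) * (∏ i, (z i ^ 3 + 1)) * (∏ i, (2 - (z i + (z i)⁻¹))) := by
  simp only [← Finset.prod_mul_distrib]
  refine Finset.prod_congr rfl fun i _ => ?_
  have := hz i
  field_simp
  ring

lemma exp_pi_div_three_sq :
    Complex.exp ((Real.pi : ℂ) * Complex.I / 3) ^ 2
      = Complex.exp ((Real.pi : ℂ) * Complex.I / 3) - 1 := by
  have h : Complex.exp ((Real.pi : ℂ) * Complex.I / 3) = 1 / 2 + (√3 : ℝ) / 2 * Complex.I := by
    rw [show (Real.pi : ℂ) * Complex.I / 3 = ((Real.pi / 3 : ℝ) : ℂ) * Complex.I by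
      push_cast; ring, Complex.exp_mul_I, ← Complex.ofReal_cos, ← Complex.ofReal_sin,
      Real.cos_pi_div_three, Real.sin_pi_div_three]
    push_cast
    ring
  have h3 : ((√3 : ℝ) : ℂ) ^ 2 = 3 := by
    rw [← Complex.ofReal_pow, Real.sq_sqrt (by norm_num)]
    norm_num
  rw [h]
  linear_combination (1 / 4 * Complex.I ^ 2) * h3 + 3 / 4 * Complex.I_sq

lemma extL_singleton {m : ℕ} (z : Fin m → ℂ) (y : ℂ) :
    (extL z [y] : Fin (m + 1) → ℂ) = Fin.snoc z y := by
  ext i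
  refine Fin.lastCases ?_ (fun i => ?_) i <;> simp [extL]

lemma extL_pair {m : ℕ} (z : Fin m → ℂ) (y w : ℂ) :
    (extL z [y, w] : Fin (m + 2) → ℂ) = Fin.snoc (Fin.snoc z y : Fin (m + 1) → ℂ) w := by
  ext i
  refine Fin.lastCases ?_ (fun i => ?_) i
  · simp [extL]
  · refine Fin.lastCases ?_ (fun i => ?_) i <;> simp [extL]

lemma add_inv_of_sq_eq_sub_one {ω : ℂ} (hω : ω ^ 2 = ω - 1) : ω + ω⁻¹ = 1 := by
  have := ne_zero_of_sq_eq_sub_one hω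
  field_simp
  linear_combination hω

lemma schurF_YkP_dblInv_even (k : ℕ) {z : Fin (2 * k) → ℂ} {zz ω : ℂ} (hz : ∀ i, z i ≠ 0)
    (hzz : zz ≠ 0) (hω : ω ^ 2 = ω - 1)
    (hden : schurDen (dblInv z zz 1 : Fin (4 * k + 2) → ℂ) ≠ 0)
    (hdenω : symplDen (Fin.snoc (Fin.snoc z zz : Fin (2 * k + 1) → ℂ) ω :
      Fin (2 * k + 1 + 1) → ℂ) ≠ 0)
    (hdenz : symplDen z ≠ 0) :
    schurF (YkP (4 * k + 2)) (dblInv z zz 1)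
      = zz ^ k * (∏ i, (1 + z i + (z i)⁻¹))
        * symplF (YkP (2 * k + 1 + 1)) (Fin.snoc (Fin.snoc z zz : Fin (2 * k + 1) → ℂ) ω)
        * symplF (YkP (2 * k)) z := by
  have hone : ∀ i, (Fin.snoc z 1 : Fin (2 * k + 1) → ℂ) i ≠ 0 :=
    forall_snoc (p := (· ≠ 0)) hz one_ne_zero
  have hsnoc : ∀ i, (Fin.snoc z zz : Fin (2 * k + 1) → ℂ) i ≠ 0 :=
    forall_snoc (p := (· ≠ 0)) hz hzz
  obtain ⟨hs, hs'⟩ := schurF_YkP_dblInv (s := 6 * k + 1) (by ring) (fun j hj => by omega) hz hzz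
    hden
  obtain ⟨hx, hx'⟩ := symplF_YkP
    (forall_snoc (p := (· ≠ 0)) hsnoc (ne_zero_of_sq_eq_sub_one hω)) hdenω
  obtain ⟨hy, hy'⟩ := symplF_YkP hz hdenz
  have hexp : ∀ (x : ℂ), x ≠ 0 → ∀ j < 2 * k + 1,
      x ^ ((2 * k + 1 + j + (2 * k + 1 + j) / 2 : ℕ) : ℤ)
          = x ^ (3 * k) * x ^ (dsExp (j + 1) - 1) ∧
        x ^ ((2 * k - j + (2 * k - j) / 2 : ℕ) : ℤ) = x ^ (3 * k) * x ^ (2 - dsExp (j + 1)) := by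
    intro x hx j hj
    rw [← zpow_natCast x (3 * k), ← zpow_add₀ hx, ← zpow_add₀ hx]
    constructor <;> congr 1 <;> simp only [dsExp] <;> omega
  rw [alternant_eq_prod_mul (fun i => (Fin.snoc z 1 : Fin (2 * k + 1) → ℂ) i ^ (3 * k))
      (ψ := dsHalfEven) (fun i j hj => by
        rw [(hexp _ (hone i) j hj).1, (hexp _ (hone i) j hj).2, ← mul_add, dsHalfEven]),
    alternant_eq_prod_mul (fun i => (Fin.snoc z zz : Fin (2 * k + 1) → ℂ) i ^ (3 * k))
      (v := Fin.snoc z zz) (ψ := dsHalfOdd) (fun i j hj => by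
        rw [(hexp _ (hsnoc i) j hj).1, (hexp _ (hsnoc i) j hj).2, ← mul_sub, dsHalfOdd]),
    alternant_dsHalfEven_snoc_one hz, alternant_dsHalfOdd hsnoc, prod_snoc (fun x => x ^ (3 * k)),
    prod_snoc (fun x => x ^ (3 * k)), prod_snoc (fun x => x ^ 2), one_pow] at hs'
  rw [alternant_dsOdd_snoc hsnoc hω] at hx'
  rw [symVandermonde_snoc, symVandermonde_snoc, prod_snoc (fun x => x - x⁻¹),
    prod_snoc (fun x => x - x⁻¹), prod_snoc (fun x => ω + ω⁻¹ - (x + x⁻¹)),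
    add_inv_of_sq_eq_sub_one hω] at hx hx'
  rw [prod_snoc (fun x => x ^ 3 + 1)] at hx'
  have hcancel : (∏ i, z i ^ (-(6 * k + 1 : ℤ))) * (∏ i, z i ^ (3 * k)) * (∏ i, z i ^ (3 * k))
      * (∏ i, ((z i ^ 3 - 1) * (z i)⁻¹)) * (∏ i, z i ^ 2) = ∏ i, (z i ^ 3 - 1) := by
    simp only [← Finset.prod_mul_distrib]
    refine Finset.prod_congr rfl fun i _ => ?_
    have := hz i
    rw [neg_add, zpow_add₀ this, zpow_neg, zpow_neg_one,
      show (6 * k : ℤ) = (3 * k : ℕ) + (3 * k : ℕ) by push_cast; ring, zpow_add₀ this,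
      zpow_natCast]
    field_simp
  have hprod := prod_cube_sub_one_mul hz
  have hsign : ((-1 : ℂ)) ^ (2 * k) = 1 := by simp
  rw [hs', hx', hy', pow_succ (-1 : ℂ), hsign]
  have hzzid : zz ^ 2 * (zz - zz⁻¹) * (1 - (zz + zz⁻¹)) = -((zz - 1) * (zz ^ 3 + 1)) := by
    field_simp
    ring
  generalize zz - zz⁻¹ = d at *
  generalize 1 - (zz + zz⁻¹) = e at *
  generalize ω - ω⁻¹ = w at *
  rw [mul_assoc (zz ^ k * _), div_mul_div_comm, mul_div_assoc', div_eq_div_iff hs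
    (mul_ne_zero hx hy)]
  generalize alternant dsOdd z = O at *
  generalize alternant dsMid (Fin.snoc z zz : Fin (2 * k + 1) → ℂ) = H at *
  generalize symVandermonde z = V at *
  generalize (∏ i, (z i - (z i)⁻¹)) = W at *
  generalize (∏ i, (zz + zz⁻¹ - (z i + (z i)⁻¹))) = T at *
  generalize (∏ i, (1 - (z i + (z i)⁻¹))) = B at *
  generalize (∏ i, (2 - (z i + (z i)⁻¹))) = C at *
  linear_combination 2 * O * H * w * W * V ^ 2 * T * zz ^ (3 * k)
    * (B * W * (zz ^ 2 * d * e) * hcancel + (zz ^ 2 * d * e) * hprod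
      + (∏ i, (1 + z i + (z i)⁻¹)) * (∏ i, (z i ^ 3 + 1)) * C * hzzid)

lemma schurF_YkP_dblInv_odd (k : ℕ) {z : Fin (2 * k + 1) → ℂ} {zz ω : ℂ} (hz : ∀ i, z i ≠ 0)
    (hzz : zz ≠ 0) (hω : ω ^ 2 = ω - 1)
    (hden : schurDen (dblInv z zz 1 : Fin (4 * k + 4) → ℂ) ≠ 0)
    (hdenz : symplDen (Fin.snoc z zz : Fin (2 * k + 1 + 1) → ℂ) ≠ 0)
    (hdenω : symplDen (Fin.snoc z ω : Fin (2 * k + 1 + 1) → ℂ) ≠ 0) :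
    schurF (YkP (4 * k + 4)) (dblInv z zz 1)
      = zz ^ k * (1 + zz) * (∏ i, (1 + z i + (z i)⁻¹))
        * symplF (YkP (2 * k + 1 + 1)) (Fin.snoc z zz)
        * symplF (YkP (2 * k + 1 + 1)) (Fin.snoc z ω) := by
  have hone : ∀ i, (Fin.snoc z 1 : Fin (2 * k + 1 + 1) → ℂ) i ≠ 0 :=
    forall_snoc (p := (· ≠ 0)) hz one_ne_zero
  have hsnoc : ∀ i, (Fin.snoc z zz : Fin (2 * k + 1 + 1) → ℂ) i ≠ 0 :=
    forall_snoc (p := (· ≠ 0)) hz hzz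
  obtain ⟨hs, hs'⟩ := schurF_YkP_dblInv (s := 6 * k + 4) (by ring) (fun j hj => by omega) hz hzz
    hden
  obtain ⟨hx, hx'⟩ := symplF_YkP hsnoc hdenz
  obtain ⟨hy, hy'⟩ := symplF_YkP
    (forall_snoc (p := (· ≠ 0)) hz (ne_zero_of_sq_eq_sub_one hω)) hdenω
  have hexp : ∀ (x : ℂ), x ≠ 0 → ∀ j < 2 * k + 1 + 1,
      x ^ ((2 * k + 1 + 1 + j + (2 * k + 1 + 1 + j) / 2 : ℕ) : ℤ)
          = x ^ (3 * k + 2) * x ^ dsExp j ∧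
        x ^ ((2 * k + 1 - j + (2 * k + 1 - j) / 2 : ℕ) : ℤ)
          = x ^ (3 * k + 2) * x ^ (-dsExp j) := by
    intro x hx j hj
    rw [← zpow_natCast x (3 * k + 2), ← zpow_add₀ hx, ← zpow_add₀ hx]
    constructor <;> congr 1 <;> simp only [dsExp] <;> omega
  rw [alternant_eq_prod_mul (fun i => (Fin.snoc z 1 : Fin (2 * k + 1 + 1) → ℂ) i ^ (3 * k + 2))
      (ψ := dsEven) (fun i j hj => by
        rw [(hexp _ (hone i) j hj).1, (hexp _ (hone i) j hj).2, ← mul_add, dsEven]),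
    alternant_eq_prod_mul (fun i => (Fin.snoc z zz : Fin (2 * k + 1 + 1) → ℂ) i ^ (3 * k + 2))
      (v := Fin.snoc z zz) (ψ := dsOdd) (fun i j hj => by
        rw [(hexp _ (hsnoc i) j hj).1, (hexp _ (hsnoc i) j hj).2, ← mul_sub, dsOdd]),
    alternant_dsEven_snoc_one hz, prod_snoc (fun x => x ^ (3 * k + 2)),
    prod_snoc (fun x => x ^ (3 * k + 2)), one_pow] at hs'
  rw [alternant_dsOdd_snoc hz hω] at hy'
  rw [symVandermonde_snoc, prod_snoc (fun x => x - x⁻¹)] at hx hx' hy hy'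
  rw [add_inv_of_sq_eq_sub_one hω] at hy hy'
  have hcancel : (∏ i, z i ^ (-(6 * k + 4 : ℤ))) * (∏ i, z i ^ (3 * k + 2))
      * (∏ i, z i ^ (3 * k + 2)) = 1 := by
    simp only [← Finset.prod_mul_distrib]
    refine Finset.prod_eq_one fun i _ => ?_
    have := hz i
    rw [← zpow_natCast, ← zpow_add₀ this, ← zpow_add₀ this]
    convert zpow_zero _ using 2
    push_cast
    ring
  have hprod := prod_cube_sub_one_mul hz
  rw [hs', hx', hy']
  have hzzid : zz * (zz - zz⁻¹) = (zz - 1) * (1 + zz) := by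
    field_simp
    ring
  generalize zz - zz⁻¹ = d at *
  generalize ω - ω⁻¹ = w at *
  rw [mul_assoc (zz ^ k * _ * _), div_mul_div_comm, mul_div_assoc', div_eq_div_iff hs
    (mul_ne_zero hx hy)]
  generalize alternant dsOdd (Fin.snoc z zz : Fin (2 * k + 1 + 1) → ℂ) = O at *
  generalize alternant dsMid z = H at *
  generalize symVandermonde z = V at *
  generalize (∏ i, (z i - (z i)⁻¹)) = W at *
  generalize (∏ i, (zz + zz⁻¹ - (z i + (z i)⁻¹))) = T at *
  generalize (∏ i, (1 - (z i + (z i)⁻¹))) = B at *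
  generalize (∏ i, (2 - (z i + (z i)⁻¹))) = C at *
  linear_combination 2 * (-1) ^ (2 * k + 1) * O * H * w * W * V ^ 2 * T * zz ^ (3 * k + 1)
    * ((∏ i, (z i ^ 3 - 1)) * B * W * (zz * d) * hcancel + (zz * d) * hprod
      + (∏ i, (1 + z i + (z i)⁻¹)) * (∏ i, (z i ^ 3 + 1)) * C * hzzid)

theorem stmt7 (k : ℕ) :
    (∀ (z : Fin (2*k) → ℂ) (zz : ℂ), (∀ i, z i ≠ 0) → zz ≠ 0 →
      schurDen (dblInv z zz 1 : Fin (4*k+2) → ℂ) ≠ 0 →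
      symplDen (extL z [zz, Complex.exp ((Real.pi : ℂ) * Complex.I / 3)] : Fin (2*k+2) → ℂ) ≠ 0 →
      symplDen z ≠ 0 →
      schurF (YkP (4*k+2)) (dblInv z zz 1)
        = zz ^ k * (∏ i : Fin (2*k), (1 + z i + (z i)⁻¹))
          * symplF (YkP (2*k+2))
              (extL z [zz, Complex.exp ((Real.pi : ℂ) * Complex.I / 3)])
          * symplF (YkP (2*k)) z) ∧
    (∀ (z : Fin (2*k+1) → ℂ) (zz : ℂ), (∀ i, z i ≠ 0) → zz ≠ 0 →
      schurDen (dblInv z zz 1 : Fin (4*k+4) → ℂ) ≠ 0 →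
      symplDen (extL z [zz] : Fin (2*k+2) → ℂ) ≠ 0 →
      symplDen (extL z [Complex.exp ((Real.pi : ℂ) * Complex.I / 3)] : Fin (2*k+2) → ℂ) ≠ 0 →
      schurF (YkP (4*k+4)) (dblInv z zz 1)
        = zz ^ k * (1 + zz) * (∏ i : Fin (2*k+1), (1 + z i + (z i)⁻¹))
          * symplF (YkP (2*k+2)) (extL z [zz])
          * symplF (YkP (2*k+2))
              (extL z [Complex.exp ((Real.pi : ℂ) * Complex.I / 3)])) := by
  have hω := exp_pi_div_three_sq
  refine ⟨fun z zz hz hzz hs hx hy => ?_, fun z zz hz hzz hs hx hy => ?_⟩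
  · rw [extL_pair] at hx ⊢
    exact schurF_YkP_dblInv_even k hz hzz hω hs hx hy
  · rw [extL_singleton] at hx hy
    rw [extL_singleton, extL_singleton]
    exact schurF_YkP_dblInv_odd k hz hzz hω hs hx hy

end
end
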